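/- arXiv:2211.01916 — 2 statements merged into one kernel-verified Lean document; each statement's English description precedes it below -/
import Mathlib

section
/- There is a universal constant K > 0 such that the following holds. For any 0 < t ≤ s ≤ T with G_{t,s}/σ_t² ≤ 1/(K·d), the forward process satisfies E‖∇log p_t(x_t) − ∇log p_t(α_{t,s}^{−1}·x_s)‖² ≤ K·d²·G_{t,s}/σ_t⁴, where the expectation is over the joint forward coupling of (x_t, x_s). -/
open MeasureTheory Real

noncomputable section

namespace DiffusionKL

/-- Euclidean space `ℝ^d`. -/
abbrev Vec (d : ℕ) := EuclideanSpace ℝ (Fin d)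

/-- Density of the isotropic Gaussian `N(m, v·I_d)` on `ℝ^d`. -/
def gaussDensity (d : ℕ) (m : Vec d) (v : ℝ) (x : Vec d) : ℝ :=
  (2 * π * v) ^ (-(d : ℝ) / 2) * Real.exp (-‖x - m‖ ^ 2 / (2 * v))

/-- The isotropic Gaussian measure `N(m, v·I_d)` on `ℝ^d`. -/
def gaussMeasure (d : ℕ) (m : Vec d) (v : ℝ) : Measure (Vec d) :=
  MeasureTheory.volume.withDensity (fun x => ENNReal.ofReal (gaussDensity d m v x))

/-- The standard Gaussian measure `γ_d = N(0, I_d)` on `ℝ^d`. -/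
def stdGauss (d : ℕ) : Measure (Vec d) := gaussMeasure d 0 1

/-- Kullback-Leibler divergence `KL(μ ‖ ν) = ∫ log (dμ/dν) dμ`. -/
def KLdiv {d : ℕ} (μ ν : Measure (Vec d)) : ℝ :=
  ∫ x, Real.log ((μ.rnDeriv ν x).toReal) ∂μ

/-- `G_{t,s} = ∫_t^s g(u)² du`. -/
def Gvar (g : ℝ → ℝ) (t s : ℝ) : ℝ := ∫ u in t..s, (g u) ^ 2

/-- `α_{t,s} = exp(−G_{t,s}/2)`. -/
def alphaF (g : ℝ → ℝ) (t s : ℝ) : ℝ := Real.exp (-(Gvar g t s) / 2)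

/-- `σ_t² = 1 − exp(−G_t)`. -/
def sigmaSq (g : ℝ → ℝ) (t : ℝ) : ℝ := 1 - Real.exp (-(Gvar g 0 t))

/-- The law of the forward marginal `x_t = α_t X₀ + σ_t Z`, `X₀ ∼ P`, `Z ∼ N(0,I_d)` indep. -/
def forwardLaw (d : ℕ) (P : Measure (Vec d)) (g : ℝ → ℝ) (t : ℝ) : Measure (Vec d) :=
  Measure.map (fun q : Vec d × Vec d => alphaF g 0 t • q.1 + Real.sqrt (sigmaSq g t) • q.2)
    (P.prod (stdGauss d))

/-- Explicit density of the forward marginal `p_t` (for `t > 0`). -/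
def forwardDensity (d : ℕ) (P : Measure (Vec d)) (g : ℝ → ℝ) (t : ℝ) (x : Vec d) : ℝ :=
  (2 * π * sigmaSq g t) ^ (-(d : ℝ) / 2) *
    ∫ y, Real.exp (-‖x - alphaF g 0 t • y‖ ^ 2 / (2 * sigmaSq g t)) ∂P

/-- Score function `∇ log p` of a density `p`. -/
def scoreOf {d : ℕ} (p : Vec d → ℝ) (x : Vec d) : Vec d :=
  gradient (fun z => Real.log (p z)) x

/-- Score `∇ log p_t` of the forward marginal at time `t > 0`. -/
def fwdScore (d : ℕ) (P : Measure (Vec d)) (g : ℝ → ℝ) (t : ℝ) : Vec d → Vec d :=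
  scoreOf (forwardDensity d P g t)

/-- Underlying measure for the joint forward coupling: `ω = (X₀, Z, Z')`. -/
def coupleMeasure (d : ℕ) (P : Measure (Vec d)) : Measure (Vec d × Vec d × Vec d) :=
  P.prod ((stdGauss d).prod (stdGauss d))

/-- The forward process at time `t`: `x_t(ω) = α_t X₀ + σ_t Z`. -/
def xt (d : ℕ) (g : ℝ → ℝ) (t : ℝ) (ω : Vec d × Vec d × Vec d) : Vec d :=
  alphaF g 0 t • ω.1 + Real.sqrt (sigmaSq g t) • ω.2.1

/-- The forward process at time `s ≥ t`, coupled with `x_t` by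
`x_s = α_{t,s} x_t + √(1−α_{t,s}²) Z'`. -/
def xts (d : ℕ) (g : ℝ → ℝ) (t s : ℝ) (ω : Vec d × Vec d × Vec d) : Vec d :=
  alphaF g t s • xt d g t ω + Real.sqrt (1 - (alphaF g t s) ^ 2) • ω.2.2

/-- Law of a Markov chain after `n` steps, started at `init`, with transition kernels `κ`. -/
def chainLaw (d : ℕ) (init : Measure (Vec d)) (κ : ℕ → Vec d → Measure (Vec d)) :
    ℕ → Measure (Vec d)
  | 0 => init
  | k + 1 => (chainLaw d init κ k).bind (κ k)

/-- One step of the exponential-integrator sampler: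
`ŷ_{k+1} | ŷ_k = a ∼ N(e^{G_{N−k}/2}·a + 2(e^{G_{N−k}/2} − 1)·s(a,t_{N−k}), (e^{G_{N−k}} − 1)·I_d)`. -/
def EIstep (d N : ℕ) (tp : ℕ → ℝ) (g : ℝ → ℝ) (sc : Vec d → ℝ → Vec d) (k : ℕ) (a : Vec d) :
    Measure (Vec d) :=
  gaussMeasure d
    (Real.exp (Gvar g (tp (N - k - 1)) (tp (N - k)) / 2) • a +
      (2 * (Real.exp (Gvar g (tp (N - k - 1)) (tp (N - k)) / 2) - 1)) • sc a (tp (N - k)))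
    (Real.exp (Gvar g (tp (N - k - 1)) (tp (N - k))) - 1)

/-- One step of the Euler–Maruyama sampler:
`ŷ_{k+1} | ŷ_k = a ∼ N((1 + G_{N−k}/2)·a + G_{N−k}·s(a,t_{N−k}), G_{N−k}·I_d)`. -/
def EMstep (d N : ℕ) (tp : ℕ → ℝ) (g : ℝ → ℝ) (sc : Vec d → ℝ → Vec d) (k : ℕ) (a : Vec d) :
    Measure (Vec d) :=
  gaussMeasure d
    ((1 + Gvar g (tp (N - k - 1)) (tp (N - k)) / 2) • a +
      (Gvar g (tp (N - k - 1)) (tp (N - k))) • sc a (tp (N - k)))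
    (Gvar g (tp (N - k - 1)) (tp (N - k)))

/-- Terminal law of the exponential-integrator sampler started at `N(0,I_d)`. -/
def EIlaw (d N : ℕ) (tp : ℕ → ℝ) (g : ℝ → ℝ) (sc : Vec d → ℝ → Vec d) : Measure (Vec d) :=
  chainLaw d (stdGauss d) (EIstep d N tp g sc) N

/-- Terminal law of the Euler–Maruyama sampler started at `N(0,I_d)`. -/
def EMlaw (d N : ℕ) (tp : ℕ → ℝ) (g : ℝ → ℝ) (sc : Vec d → ℝ → Vec d) : Measure (Vec d) :=
  chainLaw d (stdGauss d) (EMstep d N tp g sc) N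

/-- The weighted L² score estimation error
`(1/G_T)·Σ_{k=1}^N G_k·E_{p_{t_k}} ‖∇log p_{t_k}(x) − s(x,t_k)‖²`. -/
def scoreErr (d N : ℕ) (P : Measure (Vec d)) (g : ℝ → ℝ) (tp : ℕ → ℝ)
    (sc : Vec d → ℝ → Vec d) : ℝ :=
  (1 / Gvar g 0 (tp N)) * ∑ k ∈ Finset.range N,
    Gvar g (tp k) (tp (k + 1)) *
      ∫ x, ‖fwdScore d P g (tp (k + 1)) x - sc x (tp (k + 1))‖ ^ 2
        ∂(forwardLaw d P g (tp (k + 1)))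

/-- Entry `(i,j)` of the Hessian matrix `∇²f(x)`. -/
def hessEntry {d : ℕ} (f : Vec d → ℝ) (x : Vec d) (i j : Fin d) : ℝ :=
  fderiv ℝ (fun y => fderiv ℝ f y (EuclideanSpace.single j 1)) x (EuclideanSpace.single i 1)

/-- Frobenius norm of the Hessian matrix `∇²f(x)`. -/
def hessFrob {d : ℕ} (f : Vec d → ℝ) (x : Vec d) : ℝ :=
  Real.sqrt (∑ i, ∑ j, (hessEntry f x i j) ^ 2)

/-- Density of the Gaussian perturbation `X + σZ`, `X ∼ P`, `Z ∼ N(0,I_d)`. -/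
def perturbDensity (d : ℕ) (P : Measure (Vec d)) (σ : ℝ) (x : Vec d) : ℝ :=
  (2 * π * σ ^ 2) ^ (-(d : ℝ) / 2) * ∫ y, Real.exp (-‖x - y‖ ^ 2 / (2 * σ ^ 2)) ∂P

/-- Density of `μY + σZ`, `Y ∼ P`, `Z ∼ N(0,I_d)`. -/
def perturbDensity' (d : ℕ) (P : Measure (Vec d)) (μ σ : ℝ) (x : Vec d) : ℝ :=
  (2 * π * σ ^ 2) ^ (-(d : ℝ) / 2) * ∫ y, Real.exp (-‖x - μ • y‖ ^ 2 / (2 * σ ^ 2)) ∂P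

/-- Law of the Gaussian perturbation `X + σZ`. -/
def perturbLaw (d : ℕ) (P : Measure (Vec d)) (σ : ℝ) : Measure (Vec d) :=
  Measure.map (fun q : Vec d × Vec d => q.1 + σ • q.2)
    (P.prod (MeasureTheory.volume.withDensity
      (fun x : Vec d => ENNReal.ofReal ((2 * π) ^ (-(d : ℝ) / 2) * Real.exp (-‖x‖ ^ 2 / 2)))))

/-- The tilted conditional measure `dP̃_{μ,σ}(y|x) ∝ exp(−‖x−μy‖²/(2σ²)) dP(y)`. -/
def tiltMeasure (d : ℕ) (P : Measure (Vec d)) (μ σ : ℝ) (x : Vec d) : Measure (Vec d) :=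
  ((P.withDensity (fun y => ENNReal.ofReal (Real.exp (-‖x - μ • y‖ ^ 2 / (2 * σ ^ 2))))) Set.univ)⁻¹ •
    P.withDensity (fun y => ENNReal.ofReal (Real.exp (-‖x - μ • y‖ ^ 2 / (2 * σ ^ 2))))

/-- Sub-exponential (ψ₁-Orlicz) norm of `f` under the measure `μ`. -/
def psi1Norm {α : Type*} [MeasurableSpace α] (μ : Measure α) (f : α → ℝ) : ℝ :=
  sInf {t : ℝ | 0 < t ∧ ∫ x, Real.exp (|f x| / t) ∂μ ≤ 2}

/-- Sub-Gaussian (ψ₂-Orlicz) norm of `f` under the measure `μ`. -/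
def psi2Norm {α : Type*} [MeasurableSpace α] (μ : Measure α) (f : α → ℝ) : ℝ :=
  sInf {t : ℝ | 0 < t ∧ ∫ x, Real.exp ((f x) ^ 2 / t ^ 2) ∂μ ≤ 2}


lemma gauss_lint (d : ℕ) {b : ℝ} (hb : 0 < b) :
    ∫⁻ z : Vec d, ENNReal.ofReal (Real.exp (-b * ‖z‖ ^ 2)) =
      ENNReal.ofReal ((π / b) ^ ((d : ℝ) / 2)) := by
  have h := GaussianFourier.integral_rexp_neg_mul_sq_norm (V := Vec d) hb
  simp only [finrank_euclideanSpace, Fintype.card_fin] at h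
  rw [← h, ofReal_integral_eq_lintegral_ofReal]
  · by_contra hc
    rw [integral_undef hc] at h
    have : 0 < (π / b) ^ ((d : ℝ) / 2) := by positivity
    linarith
  · exact Filter.Eventually.of_forall fun _ => (Real.exp_pos _).le

lemma gauss_shift (d : ℕ) (u : Vec d) {b : ℝ} (hb : 0 < b) :
    ∫⁻ z : Vec d, ENNReal.ofReal (Real.exp (-b * ‖z - u‖ ^ 2)) =
      ENNReal.ofReal ((π / b) ^ ((d : ℝ) / 2)) := by
  rw [← gauss_lint d hb]
  exact lintegral_sub_right_eq_self (fun z : Vec d => ENNReal.ofReal (Real.exp (-b * ‖z‖ ^ 2))) u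

lemma gd_meas (d : ℕ) : Measurable (fun x : Vec d => ENNReal.ofReal (gaussDensity d 0 1 x)) := by
  unfold gaussDensity
  fun_prop

lemma lint_std (d : ℕ) (f : Vec d → ENNReal) (hf : Measurable f) :
    ∫⁻ z, f z ∂(stdGauss d) =
      ENNReal.ofReal ((2 * π) ^ (-(d : ℝ) / 2)) *
        ∫⁻ z, ENNReal.ofReal (Real.exp (-‖z‖ ^ 2 / 2)) * f z := by
  unfold stdGauss gaussMeasure
  rw [lintegral_withDensity_eq_lintegral_mul _ (gd_meas d) hf, ← lintegral_const_mul]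
  · refine lintegral_congr fun z => ?_
    simp only [Pi.mul_apply, gaussDensity, sub_zero, mul_one]
    rw [ENNReal.ofReal_mul (by positivity), mul_assoc]
  · fun_prop

lemma cst (d : ℕ) : (2 * π) ^ (-(d : ℝ) / 2) * (π / (1 / 2)) ^ ((d : ℝ) / 2) = 1 := by
  have : π / (1 / 2) = 2 * π := by ring
  rw [this, ← Real.rpow_add (by positivity)]
  have : -(d : ℝ) / 2 + d / 2 = 0 := by ring
  rw [this, Real.rpow_zero]

lemma mgf_std (d : ℕ) (u : Vec d) :
    ∫⁻ z, ENNReal.ofReal (Real.exp (inner ℝ u z)) ∂(stdGauss d) =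
      ENNReal.ofReal (Real.exp (‖u‖ ^ 2 / 2)) := by
  rw [lint_std _ _ (by fun_prop)]
  have : ∀ z : Vec d, ENNReal.ofReal (Real.exp (-‖z‖ ^ 2 / 2)) *
      ENNReal.ofReal (Real.exp (inner ℝ u z)) =
      ENNReal.ofReal (Real.exp (‖u‖ ^ 2 / 2)) *
        ENNReal.ofReal (Real.exp (-(1 / 2) * ‖z - u‖ ^ 2)) := by
    intro z
    rw [← ENNReal.ofReal_mul (Real.exp_pos _).le, ← ENNReal.ofReal_mul (Real.exp_pos _).le,
      ← Real.exp_add, ← Real.exp_add, norm_sub_sq_real, real_inner_comm]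
    congr 2
    ring
  simp_rw [this]
  rw [lintegral_const_mul _ (by fun_prop), gauss_shift d u (by norm_num), mul_left_comm,
    ← ENNReal.ofReal_mul (by positivity), cst]
  simp

instance std_prob (d : ℕ) : IsProbabilityMeasure (stdGauss d) := by
  constructor
  have := mgf_std d 0
  simpa using this

lemma quad_std (d : ℕ) (hd : 1 ≤ d) :
    ∫⁻ z, ENNReal.ofReal (Real.exp (‖z‖ ^ 2 / (4 * d))) ∂(stdGauss d) ≤ 2 := by
  have hd' : (1 : ℝ) ≤ d := by exact_mod_cast hd
  have hx : 1 / (4 * (d : ℝ)) ≤ 1 / 4 := by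
    apply one_div_le_one_div_of_le <;> linarith
  have hb : 0 < 1 / 2 - 1 / (4 * (d : ℝ)) := by linarith
  rw [lint_std _ _ (by fun_prop)]
  have : ∀ z : Vec d, ENNReal.ofReal (Real.exp (-‖z‖ ^ 2 / 2)) *
      ENNReal.ofReal (Real.exp (‖z‖ ^ 2 / (4 * d))) =
        ENNReal.ofReal (Real.exp (-(1 / 2 - 1 / (4 * (d : ℝ))) * ‖z‖ ^ 2)) := by
    intro z
    rw [← ENNReal.ofReal_mul (Real.exp_pos _).le, ← Real.exp_add]
    congr 2
    ring
  simp_rw [this]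
  rw [gauss_lint d hb, ← ENNReal.ofReal_mul (by positivity)]
  rw [show (2 : ENNReal) = ENNReal.ofReal 2 by simp]
  apply ENNReal.ofReal_le_ofReal
  set q : ℝ := 1 - 1 / (2 * d) with hq
  have hx2 : 1 / (2 * (d : ℝ)) = 2 * (1 / (4 * (d : ℝ))) := by field_simp; norm_num
  have hq1 : 1 / 2 ≤ q := by rw [hq, hx2]; linarith
  have hq2 : q ≤ 1 := by rw [hq]; have : 0 < 1 / (2 * (d : ℝ)) := by positivity
                         linarith
  have e : π / (1 / 2 - 1 / (4 * (d : ℝ))) = (2 * π) * q⁻¹ := by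
    have : 1 / 2 - 1 / (4 * (d : ℝ)) = q / 2 := by rw [hq, hx2]; ring
    rw [this]; field_simp
  rw [e, Real.mul_rpow (x := 2 * π) (y := q⁻¹) (by positivity) (by positivity), ← mul_assoc, ← Real.rpow_add (by positivity)]
  have : -(d : ℝ) / 2 + d / 2 = 0 := by ring
  rw [this, Real.rpow_zero, one_mul]
  have hqi : 1 ≤ q⁻¹ := (one_le_inv₀ (by linarith)).2 hq2
  calc q⁻¹ ^ ((d : ℝ) / 2) ≤ q⁻¹ ^ (d : ℝ) :=
        Real.rpow_le_rpow_of_exponent_le hqi (by linarith)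
    _ = (q ^ d)⁻¹ := by rw [Real.rpow_natCast, inv_pow]
    _ ≤ (1 / 2 : ℝ)⁻¹ := by
        apply inv_anti₀ (by norm_num)
        have := one_add_mul_le_pow (a := -(1 / (2 * (d : ℝ)))) (by rw [hx2]; linarith) d
        have h3 : (d : ℝ) * -(1 / (2 * (d : ℝ))) = - (1 / 2) := by field_simp
        rw [h3, ← sub_eq_add_neg 1 (1 / (2 * (d : ℝ))), ← hq] at this
        linarith
    _ = 2 := by norm_num

lemma sq_int_le {α : Type*} [MeasurableSpace α] (ν : Measure α) [IsProbabilityMeasure ν]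
    (f : α → ℝ) (hf : Integrable f ν) (hf2 : Integrable (fun x => f x ^ 2) ν) :
    (∫ x, f x ∂ν) ^ 2 ≤ ∫ x, f x ^ 2 ∂ν := by
  set m := ∫ x, f x ∂ν with hm
  have h : ∫ x, (2 * m * f x - m ^ 2) ∂ν ≤ ∫ x, f x ^ 2 ∂ν := by
    apply integral_mono _ hf2
    · intro x
      have := sq_nonneg (f x - m)
      show 2 * m * f x - m ^ 2 ≤ f x ^ 2
      nlinarith
    · exact (hf.const_mul _).sub (integrable_const _)
  rw [integral_sub (hf.const_mul _) (integrable_const _), integral_const_mul, ← hm] at h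
  simp at h
  nlinarith

lemma core_ineq {α E : Type*} [MeasurableSpace α] [NormedAddCommGroup E] [NormedSpace ℝ E]
    [CompleteSpace E]
    (ν : Measure α) [IsProbabilityMeasure ν] (u : α → E) (ξ h : α → ℝ) (L M : ℝ)
    (hL : 0 ≤ L) (hM : 0 ≤ M)
    (hu : AEStronglyMeasurable u ν) (hξ : Measurable ξ) (hh : Measurable h)
    (h1 : ∀ x, 1 ≤ h x) (hub : ∀ x, ‖u x‖ ≤ L * h x)
    (hexp : ∀ x, |Real.exp (ξ x) - 1| ≤ M * h x) (hneg : ∀ x, Real.exp (-ξ x) ≤ h x)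
    (hpos : ∀ x, Real.exp (ξ x) ≤ h x)
    (hint : Integrable (fun x => h x ^ 8) ν) :
    ‖∫ x, u x ∂(ν.tilted ξ) - ∫ x, u x ∂ν‖ ^ 2 ≤ 4 * L ^ 2 * M ^ 2 * ∫ x, h x ^ 8 ∂ν := by
  have h0 : ∀ x, 0 ≤ h x := fun x => by linarith [h1 x]
  have hk : ∀ k : ℕ, k ≤ 8 → Integrable (fun x => h x ^ k) ν := by
    intro k hk
    refine hint.mono' (by fun_prop) (Filter.Eventually.of_forall fun x => ?_)
    rw [Real.norm_eq_abs, abs_of_nonneg (pow_nonneg (h0 x) k)]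
    exact pow_le_pow_right₀ (h1 x) hk
  have hi1 : Integrable h ν := by simpa using hk 1 (by norm_num)
  have hi2 := hk 2 (by norm_num)
  have hi4 := hk 4 (by norm_num)
  have iu : Integrable u ν := (hi1.const_mul L).mono' hu (Filter.Eventually.of_forall hub)
  have ie : Integrable (fun x => Real.exp (ξ x)) ν := by
    refine hi1.mono' (by fun_prop) (Filter.Eventually.of_forall fun x => ?_)
    rw [Real.norm_eq_abs, abs_of_pos (Real.exp_pos _)]
    exact hpos x
  have ien : Integrable (fun x => Real.exp (-ξ x)) ν := by
    refine hi1.mono' (by fun_prop) (Filter.Eventually.of_forall fun x => ?_)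
    rw [Real.norm_eq_abs, abs_of_pos (Real.exp_pos _)]
    exact hneg x
  have ie1 : Integrable (fun x => Real.exp (ξ x) - 1) ν := ie.sub (integrable_const _)
  have bprod : ∀ x, ‖(Real.exp (ξ x) - 1) • u x‖ ≤ L * M * h x ^ 2 := by
    intro x
    rw [norm_smul, Real.norm_eq_abs]
    calc _ ≤ (M * h x) * (L * h x) :=
          mul_le_mul (hexp x) (hub x) (norm_nonneg _) (mul_nonneg hM (h0 x))
      _ = _ := by ring
  have ip : Integrable (fun x => (Real.exp (ξ x) - 1) • u x) ν :=
    (hi2.const_mul (L * M)).mono' (by fun_prop) (Filter.Eventually.of_forall bprod)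
  set e := ∫ x, Real.exp (ξ x) ∂ν with he
  have epos : 0 < e := integral_exp_pos ie
  have H1 : 1 ≤ ∫ x, h x ∂ν := by
    have := integral_mono (integrable_const (1 : ℝ)) hi1 h1
    simpa using this
  set H := ∫ x, h x ^ 2 ∂ν with hH
  have HH : (∫ x, h x ∂ν) ^ 2 ≤ H := sq_int_le ν h hi1 hi2
  have H2 : H ^ 2 ≤ ∫ x, h x ^ 4 ∂ν := by
    have := sq_int_le ν (fun x => h x ^ 2) hi2 (by simpa only [← pow_mul] using hi4)
    simpa only [← pow_mul] using this
  have H4 : (∫ x, h x ^ 4 ∂ν) ^ 2 ≤ ∫ x, h x ^ 8 ∂ν := by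
    have := sq_int_le ν (fun x => h x ^ 4) hi4 (by simpa only [← pow_mul] using hint)
    simpa only [← pow_mul] using this
  have einv : e⁻¹ ≤ H := by
    have hb : ∫ x, (2 * e⁻¹ - e⁻¹ ^ 2 * Real.exp (ξ x)) ∂ν ≤ ∫ x, Real.exp (-ξ x) ∂ν := by
      apply integral_mono ((integrable_const _).sub (ie.const_mul _)) ien
      intro x
      show 2 * e⁻¹ - e⁻¹ ^ 2 * Real.exp (ξ x) ≤ Real.exp (-ξ x)
      rw [Real.exp_neg]
      have hp := Real.exp_pos (ξ x)
      set y := Real.exp (ξ x)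
      have : y⁻¹ - (2 * e⁻¹ - e⁻¹ ^ 2 * y) = y * (y⁻¹ - e⁻¹) ^ 2 := by
        field_simp; ring
      have h3 : 0 ≤ y * (y⁻¹ - e⁻¹) ^ 2 := by positivity
      linarith
    rw [integral_sub (integrable_const _) (ie.const_mul _), integral_const_mul (e⁻¹ ^ 2), ← he] at hb
    simp only [integral_const, probReal_univ, one_smul] at hb
    have h3 : 2 * e⁻¹ - e⁻¹ ^ 2 * e = e⁻¹ := by field_simp; ring
    rw [h3] at hb
    have := integral_mono ien hi1 hneg
    have : ∫ x, h x ∂ν ≤ (∫ x, h x ∂ν) ^ 2 := by nlinarith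
    linarith
  have key : ∫ x, u x ∂(ν.tilted ξ) - ∫ x, u x ∂ν =
      e⁻¹ • (∫ x, (Real.exp (ξ x) - 1) • u x ∂ν -
        (∫ x, (Real.exp (ξ x) - 1) ∂ν) • ∫ x, u x ∂ν) := by
    have a1 : ∫ x, u x ∂(ν.tilted ξ) = e⁻¹ • ∫ x, Real.exp (ξ x) • u x ∂ν := by
      rw [integral_tilted, ← integral_smul]
      refine integral_congr_ae (Filter.Eventually.of_forall fun x => ?_)
      simp only [smul_smul, ← he]
      congr 1
      rw [div_eq_inv_mul]
    have a2 : ∫ x, Real.exp (ξ x) • u x ∂ν =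
        ∫ x, (Real.exp (ξ x) - 1) • u x ∂ν + ∫ x, u x ∂ν := by
      rw [← integral_add ip iu]
      refine integral_congr_ae (Filter.Eventually.of_forall fun x => ?_)
      simp [sub_smul]
    have a3 : ∫ x, (Real.exp (ξ x) - 1) ∂ν = e - 1 := by
      rw [integral_sub ie (integrable_const _)]; simp [he]
    rw [a1, a2, a3, sub_smul, one_smul]
    have : ∫ x, u x ∂ν = e⁻¹ • e • ∫ x, u x ∂ν := by
      rw [smul_smul, inv_mul_cancel₀ epos.ne', one_smul]
    nth_rw 2 [this]
    rw [← smul_sub]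
    congr 1
    abel
  have b1 : ‖∫ x, (Real.exp (ξ x) - 1) • u x ∂ν‖ ≤ L * M * H := by
    rw [hH, ← integral_const_mul]
    exact norm_integral_le_of_norm_le (hi2.const_mul _) (Filter.Eventually.of_forall bprod)
  have b2 : ‖∫ x, (Real.exp (ξ x) - 1) ∂ν‖ ≤ M * ∫ x, h x ∂ν := by
    rw [← integral_const_mul]
    exact norm_integral_le_of_norm_le (hi1.const_mul _) (Filter.Eventually.of_forall hexp)
  have b3 : ‖∫ x, u x ∂ν‖ ≤ L * ∫ x, h x ∂ν := by
    rw [← integral_const_mul]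
    exact norm_integral_le_of_norm_le (hi1.const_mul _) (Filter.Eventually.of_forall hub)
  have hH0 : 0 ≤ H := (sq_nonneg _).trans HH
  have b4 : ‖∫ x, u x ∂(ν.tilted ξ) - ∫ x, u x ∂ν‖ ≤ 2 * L * M * H ^ 2 := by
    rw [key, norm_smul, Real.norm_eq_abs, abs_of_pos (inv_pos.2 epos)]
    have b5 : ‖∫ x, (Real.exp (ξ x) - 1) • u x ∂ν -
        (∫ x, (Real.exp (ξ x) - 1) ∂ν) • ∫ x, u x ∂ν‖ ≤ 2 * L * M * H := by
      refine (norm_sub_le _ _).trans ?_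
      rw [norm_smul]
      have := mul_le_mul b2 b3 (norm_nonneg _) (by positivity)
      have h5 : L * M * (∫ x, h x ∂ν) ^ 2 ≤ L * M * H :=
        mul_le_mul_of_nonneg_left HH (by positivity)
      nlinarith
    calc _ ≤ H * (2 * L * M * H) := mul_le_mul einv b5 (norm_nonneg _) hH0
      _ = _ := by ring
  calc _ ≤ (2 * L * M * H ^ 2) ^ 2 := pow_le_pow_left₀ (norm_nonneg _) b4 2
    _ = 4 * L ^ 2 * M ^ 2 * (H ^ 2) ^ 2 := by ring
    _ ≤ 4 * L ^ 2 * M ^ 2 * (∫ x, h x ^ 4 ∂ν) ^ 2 := by gcongr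
    _ ≤ _ := by gcongr

/-- Posterior law. -/
def Qm {d : ℕ} (P : Measure (Vec d)) (x : Vec d) : Measure (Vec d) :=
  P.tilted (fun y => -‖y - x‖ ^ 2 / 2)

/-- Score of the unit-variance perturbation. -/
def Sc {d : ℕ} (P : Measure (Vec d)) (x : Vec d) : Vec d := ∫ y, (y - x) ∂(Qm P x)

/-- The dominating function. -/
def Phi (d : ℕ) (u z : Vec d) : ℝ :=
  Real.exp (‖u‖ ^ 2 / (4 * d)) + Real.exp (inner ℝ u z / (2 * √d)) +
    Real.exp (-(inner ℝ u z / (2 * √d)))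

lemma w_le {d : ℕ} (y x : Vec d) : Real.exp (-‖y - x‖ ^ 2 / 2) ≤ 1 := by
  rw [Real.exp_le_one_iff]; have := sq_nonneg ‖y - x‖; linarith

lemma w_int {d : ℕ} (P : Measure (Vec d)) [IsProbabilityMeasure P] (x : Vec d) :
    Integrable (fun y => Real.exp (-‖y - x‖ ^ 2 / 2)) P := by
  refine (integrable_const (1 : ℝ)).mono' (by fun_prop) (Filter.Eventually.of_forall fun y => ?_)
  rw [Real.norm_eq_abs, abs_of_pos (Real.exp_pos _)]
  exact w_le y x

instance Qm_prob {d : ℕ} (P : Measure (Vec d)) [IsProbabilityMeasure P] (x : Vec d) :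
    IsProbabilityMeasure (Qm P x) := isProbabilityMeasure_tilted (w_int P x)

lemma mul_exp_le_one (t : ℝ) : t * Real.exp (-t ^ 2 / 2) ≤ 1 := by
  have h1 : t ≤ Real.exp (t ^ 2 / 2) := by
    have := Real.add_one_le_exp (t ^ 2 / 2)
    nlinarith [sq_nonneg (t - 1)]
  have : Real.exp (t ^ 2 / 2) * Real.exp (-t ^ 2 / 2) = 1 := by
    rw [← Real.exp_add]; simp; ring
  rw [← this]
  exact mul_le_mul_of_nonneg_right h1 (Real.exp_pos _).le

lemma uw_int {d : ℕ} (P : Measure (Vec d)) [IsProbabilityMeasure P] (x : Vec d) :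
    Integrable (fun y => Real.exp (-‖y - x‖ ^ 2 / 2) • (y - x)) P := by
  refine (integrable_const (1 : ℝ)).mono' (by fun_prop) (Filter.Eventually.of_forall fun y => ?_)
  rw [norm_smul, Real.norm_eq_abs, abs_of_pos (Real.exp_pos _), mul_comm]
  exact mul_exp_le_one _

lemma hasGrad {d : ℕ} (P : Measure (Vec d)) [IsProbabilityMeasure P] (x : Vec d) :
    HasFDerivAt (fun x => Real.log (∫ y, Real.exp (-‖y - x‖ ^ 2 / 2) ∂P))
      (innerSL ℝ (Sc P x)) x := by
  have hd : HasFDerivAt (fun x => ∫ y, Real.exp (-‖y - x‖ ^ 2 / 2) ∂P)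
      (∫ y, innerSL ℝ (Real.exp (-‖y - x‖ ^ 2 / 2) • (y - x)) ∂P) x := by
    refine hasFDerivAt_integral_of_dominated_of_fderiv_le
      (F := fun x y => Real.exp (-‖y - x‖ ^ 2 / 2))
      (F' := fun x y => innerSL ℝ (Real.exp (-‖y - x‖ ^ 2 / 2) • (y - x)))
      (bound := fun _ => (1 : ℝ)) Filter.univ_mem ?_ (w_int P x) ?_ ?_ (integrable_const _) ?_
    · exact Filter.Eventually.of_forall fun x => (w_int P x).1
    · exact (innerSL ℝ).continuous.comp_aestronglyMeasurable (uw_int P x).1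
    · refine Filter.Eventually.of_forall fun y z _ => ?_
      rw [innerSL_apply_norm, norm_smul, Real.norm_eq_abs, abs_of_pos (Real.exp_pos _), mul_comm]
      exact mul_exp_le_one _
    · refine Filter.Eventually.of_forall fun y z _ => ?_
      have h1 : HasFDerivAt (fun z : Vec d => y - z) (-(ContinuousLinearMap.id ℝ (Vec d))) z :=
        (hasFDerivAt_id z).const_sub y
      have h2 := ((h1.norm_sq).const_mul (-(1 / 2 : ℝ))).exp
      have e1 : (fun z : Vec d => Real.exp (-‖y - z‖ ^ 2 / 2)) =
          fun z => Real.exp (-(1 / 2 : ℝ) * ‖y - z‖ ^ 2) := by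
        funext z; congr 1; ring
      show HasFDerivAt (fun z : Vec d => Real.exp (-‖y - z‖ ^ 2 / 2)) _ z
      rw [e1]
      refine h2.congr_fderiv ?_
      ext v
      have e2 : -‖y - z‖ ^ 2 / 2 = -(2⁻¹ * ‖y - z‖ ^ 2) := by ring
      simp
      rw [e2]
      ring
  rw [ContinuousLinearMap.integral_comp_comm _ (uw_int P x)] at hd
  have hpos : 0 < ∫ y, Real.exp (-‖y - x‖ ^ 2 / 2) ∂P := integral_exp_pos (w_int P x)
  refine (hd.log hpos.ne').congr_fderiv ?_
  rw [← map_smul]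
  congr 1
  unfold Sc Qm
  rw [integral_tilted, ← integral_smul]
  refine integral_congr_ae (Filter.Eventually.of_forall fun y => ?_)
  simp only [smul_smul]
  congr 1
  exact (div_eq_inv_mul _ _).symm

lemma Qm_shift {d : ℕ} (P : Measure (Vec d)) [IsProbabilityMeasure P] (x δ : Vec d) :
    Qm P (x + δ) = (Qm P x).tilted (fun y => inner ℝ (y - x) δ) := by
  unfold Qm
  rw [tilted_tilted (w_int P x)]
  have h := tilted_tilted (μ := P) (f := fun _ => -‖δ‖ ^ 2 / 2) (integrable_const _)
    ((fun y => -‖y - x‖ ^ 2 / 2) + fun y => inner ℝ (y - x) δ)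
  rw [tilted_const] at h
  rw [h]
  congr 1
  funext y
  simp only [Pi.add_apply]
  rw [← sub_sub, norm_sub_sq_real]
  ring

lemma abs_exp_sub_one_le' (t : ℝ) : |Real.exp t - 1| ≤ |t| * Real.exp |t| := by
  rcases le_total 0 t with h | h
  · rw [abs_of_nonneg h, abs_of_nonneg (by linarith [Real.add_one_le_exp t])]
    have h1 := Real.add_one_le_exp (-t)
    have h2 : Real.exp (-t) * Real.exp t = 1 := by rw [← Real.exp_add]; simp
    nlinarith [Real.exp_pos t]
  · rw [abs_of_nonpos h, abs_of_nonpos (by linarith [Real.exp_le_one_iff.2 h])]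
    have h1 := Real.add_one_le_exp t
    have h2 : 1 ≤ Real.exp (-t) := Real.one_le_exp (by linarith)
    nlinarith

/-- numeric constant -/
def C0 : ℝ := 3 ^ 7 * (4 ^ 8 * 40320 + 1)

lemma h8_le (d : ℕ) (hd : 1 ≤ d) (u z : Vec d) :
    (‖u‖ / √d + (|inner ℝ u z| / √d) * Real.exp ((|inner ℝ u z| / √d) / 32) +
      Real.exp ((|inner ℝ u z| / √d) / 32)) ^ 8 ≤ C0 * Phi d u z := by
  have hd' : (1 : ℝ) ≤ d := by exact_mod_cast hd
  have hs : 0 < √(d : ℝ) := Real.sqrt_pos.2 (by linarith)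
  have hss : √(d : ℝ) ^ 2 = d := Real.sq_sqrt (by linarith)
  set η := |inner ℝ u z| / √d with hη
  have hη0 : 0 ≤ η := by positivity
  set a := ‖u‖ / √d with ha
  have ha0 : 0 ≤ a := by positivity
  set c := Real.exp (η / 32) with hc
  have hc0 : 0 < c := Real.exp_pos _
  have conv : (a + η * c + c) ^ 8 ≤ 3 ^ 7 * (a ^ 8 + (η * c) ^ 8 + c ^ 8) := by
    have sq3 : ∀ x y w : ℝ, (x + y + w) ^ 2 ≤ 3 * (x ^ 2 + y ^ 2 + w ^ 2) := fun x y w => by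
      nlinarith [sq_nonneg (x - y), sq_nonneg (y - w), sq_nonneg (x - w)]
    have s1 := sq3 a (η * c) c
    have s2 := sq3 (a ^ 2) ((η * c) ^ 2) (c ^ 2)
    have s3 := sq3 ((a ^ 2) ^ 2) (((η * c) ^ 2) ^ 2) ((c ^ 2) ^ 2)
    calc (a + η * c + c) ^ 8 = (((a + η * c + c) ^ 2) ^ 2) ^ 2 := by ring
      _ ≤ (((3 * (a ^ 2 + (η * c) ^ 2 + c ^ 2))) ^ 2) ^ 2 := by gcongr
      _ = 3 ^ 4 * (((a ^ 2 + (η * c) ^ 2 + c ^ 2)) ^ 2) ^ 2 := by ring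
      _ ≤ 3 ^ 4 * (3 * ((a ^ 2) ^ 2 + ((η * c) ^ 2) ^ 2 + (c ^ 2) ^ 2)) ^ 2 := by gcongr
      _ = 3 ^ 6 * ((a ^ 2) ^ 2 + ((η * c) ^ 2) ^ 2 + (c ^ 2) ^ 2) ^ 2 := by ring
      _ ≤ 3 ^ 6 * (3 * (((a ^ 2) ^ 2) ^ 2 + (((η * c) ^ 2) ^ 2) ^ 2 + ((c ^ 2) ^ 2) ^ 2)) := by
          gcongr
      _ = _ := by ring
  have hc8 : c ^ 8 = Real.exp (η / 4) := by
    rw [hc, ← Real.exp_nat_mul]; congr 1; push_cast; ring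
  have a8 : a ^ 8 ≤ 6144 * Real.exp (‖u‖ ^ 2 / (4 * d)) := by
    have h := Real.pow_div_factorial_le_exp (x := ‖u‖ ^ 2 / (4 * d)) (by positivity) 4
    have : a ^ 8 = 256 * (‖u‖ ^ 2 / (4 * d)) ^ 4 := by
      have : a ^ 2 = ‖u‖ ^ 2 / d := by rw [ha, div_pow, hss]
      calc a ^ 8 = (a ^ 2) ^ 4 := by ring
        _ = _ := by rw [this]; field_simp; norm_num
    rw [this]
    simp [Nat.factorial] at h
    linarith
  have e2 : Real.exp (η / 2) ≤ Real.exp (inner ℝ u z / (2 * √d)) +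
      Real.exp (-(inner ℝ u z / (2 * √d))) := by
    have h1 := Real.exp_pos (inner ℝ u z / (2 * √d))
    have h2 := Real.exp_pos (-(inner ℝ u z / (2 * √d)))
    rcases abs_cases (inner ℝ u z) with ⟨h, _⟩ | ⟨h, _⟩
    · have : η / 2 = inner ℝ u z / (2 * √d) := by rw [hη, h]; field_simp
      rw [this]; linarith
    · have : η / 2 = -(inner ℝ u z / (2 * √d)) := by rw [hη, h]; field_simp
      rw [this]; linarith
  have b8 : (η * c) ^ 8 ≤ (4 ^ 8 * 40320) * Real.exp (η / 2) := by
    have h := Real.pow_div_factorial_le_exp (x := η / 4) (by positivity) 8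
    have hn : Real.exp (η / 2) = Real.exp (η / 4) * Real.exp (η / 4) := by
      rw [← Real.exp_add]; congr 1; ring
    have h2 : η ^ 8 ≤ 4 ^ 8 * 40320 * Real.exp (η / 4) := by
      simp [Nat.factorial] at h
      have : (η / 4) ^ 8 = η ^ 8 / 4 ^ 8 := by ring
      rw [this] at h
      linarith
    rw [mul_pow, hc8, hn, ← mul_assoc]
    exact mul_le_mul_of_nonneg_right h2 (Real.exp_pos _).le
  have c8 : c ^ 8 ≤ Real.exp (η / 2) := by
    rw [hc8]; apply Real.exp_le_exp.2; linarith
  unfold C0 Phi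
  have p1 := Real.exp_pos (‖u‖ ^ 2 / (4 * d))
  linarith

lemma Phi_int {d : ℕ} (hd : 1 ≤ d) (P : Measure (Vec d)) [IsProbabilityMeasure P] (x z : Vec d) :
    Integrable (fun y => Phi d (y - x) z) (Qm P x) := by
  have hd' : (1 : ℝ) ≤ d := by exact_mod_cast hd
  have hs : 0 < √(d : ℝ) := Real.sqrt_pos.2 (by linarith)
  unfold Qm
  rw [integrable_tilted_iff (w_int P x)]
  refine (integrable_const (1 + Real.exp (‖z‖ ^ 2 / (8 * d)) +
    Real.exp (‖z‖ ^ 2 / (8 * d)) : ℝ)).mono' (by unfold Phi; fun_prop)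
      (Filter.Eventually.of_forall fun y => ?_)
  have hP : 0 ≤ Phi d (y - x) z := by unfold Phi; positivity
  rw [smul_eq_mul, Real.norm_eq_abs, abs_of_nonneg (by positivity)]
  unfold Phi
  set u := y - x
  rw [mul_add, mul_add, ← Real.exp_add, ← Real.exp_add, ← Real.exp_add]
  have q : ∀ v : Vec d, inner ℝ u v ≤ ‖u‖ ^ 2 / 2 + ‖v‖ ^ 2 / 2 := fun v => by
    have := real_inner_le_norm u v
    nlinarith [sq_nonneg (‖u‖ - ‖v‖)]
  have hss : √(d : ℝ) ^ 2 = d := Real.sq_sqrt (by linarith)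
  have nv : ‖(1 / (2 * √(d : ℝ))) • z‖ ^ 2 / 2 = ‖z‖ ^ 2 / (8 * d) := by
    rw [norm_smul, mul_pow, Real.norm_eq_abs, sq_abs, div_pow, mul_pow, hss]
    field_simp; ring
  have q1 := q ((1 / (2 * √(d : ℝ))) • z)
  have q2 := q (-((1 / (2 * √(d : ℝ))) • z))
  rw [norm_neg, nv, inner_neg_right, real_inner_smul_right, one_div_mul_eq_div] at q2
  rw [nv, real_inner_smul_right, one_div_mul_eq_div] at q1
  have q3 : ‖u‖ ^ 2 / (4 * d) ≤ ‖u‖ ^ 2 / 2 := by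
    apply div_le_div_of_nonneg_left (by positivity) (by norm_num); linarith
  refine add_le_add (add_le_add ?_ ?_) ?_
  · rw [Real.exp_le_one_iff]; linarith
  · apply Real.exp_le_exp.2; linarith
  · apply Real.exp_le_exp.2; linarith

lemma Sc_diff {d : ℕ} (hd : 1 ≤ d) (P : Measure (Vec d)) [IsProbabilityMeasure P] (x z : Vec d)
    (r : ℝ) (hr : 0 ≤ r) (hrd : r * √d ≤ 1 / 32) :
    ‖Sc P x - Sc P (x + r • z)‖ ^ 2 ≤ 8 * r ^ 2 * d * Real.exp (‖z‖ ^ 2 / (4 * d)) +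
      8 * C0 * r ^ 2 * d ^ 2 * ∫ y, Phi d (y - x) z ∂(Qm P x) := by
  have hd' : (1 : ℝ) ≤ d := by exact_mod_cast hd
  have hs : 0 < √(d : ℝ) := Real.sqrt_pos.2 (by linarith)
  have hss : √(d : ℝ) ^ 2 = d := Real.sq_sqrt (by linarith)
  set ξ : Vec d → ℝ := fun y => inner ℝ (y - x) (r • z) with hξ
  set h : Vec d → ℝ := fun y => ‖y - x‖ / √d +
    (|inner ℝ (y - x) z| / √d) * Real.exp ((|inner ℝ (y - x) z| / √d) / 32) +
      Real.exp ((|inner ℝ (y - x) z| / √d) / 32) with hh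
  have hm : Measurable h := by fun_prop
  have h8 : ∀ y, h y ^ 8 ≤ C0 * Phi d (y - x) z := fun y => h8_le d hd _ _
  have hPi := (Phi_int hd P x z).const_mul C0
  have h0 : ∀ y, 0 ≤ h y := fun y => by positivity
  have hint : Integrable (fun y => h y ^ 8) (Qm P x) := by
    refine hPi.mono' (by fun_prop) (Filter.Eventually.of_forall fun y => ?_)
    rw [Real.norm_eq_abs, abs_of_nonneg (pow_nonneg (h0 y) _)]
    exact h8 y
  have part : ∀ y, ‖y - x‖ / √d ≤ h y ∧
      (|inner ℝ (y - x) z| / √d) * Real.exp ((|inner ℝ (y - x) z| / √d) / 32) ≤ h y ∧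
      Real.exp ((|inner ℝ (y - x) z| / √d) / 32) ≤ h y := by
    intro y
    have p1 : 0 ≤ ‖y - x‖ / √d := by positivity
    have p2 : 0 ≤ (|inner ℝ (y - x) z| / √d) *
      Real.exp ((|inner ℝ (y - x) z| / √d) / 32) := by positivity
    have p3 := Real.exp_pos ((|inner ℝ (y - x) z| / √d) / 32)
    simp only [hh]
    refine ⟨by linarith, by linarith, by linarith⟩
  have hxi : ∀ y, |ξ y| = (r * √d) * (|inner ℝ (y - x) z| / √d) := by
    intro y
    simp only [hξ, real_inner_smul_right, abs_mul, abs_of_nonneg hr]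
    field_simp
  have hxi2 : ∀ y, |ξ y| ≤ (|inner ℝ (y - x) z| / √d) / 32 := by
    intro y
    rw [hxi y]
    have : 0 ≤ |inner ℝ (y - x) z| / √d := by positivity
    nlinarith
  have main := core_ineq (Qm P x) (fun y => y - x) ξ h (√d) (r * √d) hs.le (by positivity)
    (by fun_prop) (by fun_prop) hm
    (fun y => (Real.one_le_exp (by positivity)).trans (part y).2.2)
    (fun y => by
      have := (part y).1
      rw [div_le_iff₀ hs] at this
      linarith)
    (fun y => by
      refine (abs_exp_sub_one_le' _).trans ?_
      calc |ξ y| * Real.exp |ξ y| ≤ |ξ y| * Real.exp ((|inner ℝ (y - x) z| / √d) / 32) := by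
            gcongr; exact hxi2 y
        _ = (r * √d) * ((|inner ℝ (y - x) z| / √d) *
              Real.exp ((|inner ℝ (y - x) z| / √d) / 32)) := by rw [hxi y]; ring
        _ ≤ _ := by gcongr; exact (part y).2.1)
    (fun y => (Real.exp_le_exp.2 ((neg_le_abs _).trans (hxi2 y))).trans (part y).2.2)
    (fun y => (Real.exp_le_exp.2 ((le_abs_self _).trans (hxi2 y))).trans (part y).2.2)
    hint
  have hI : ∫ y, h y ^ 8 ∂(Qm P x) ≤ C0 * ∫ y, Phi d (y - x) z ∂(Qm P x) := by
    rw [← integral_const_mul]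
    exact integral_mono hint hPi h8
  rw [← Qm_shift] at main
  have iu : Integrable (fun y => y - x) (Qm P (x + r • z)) := by
    have i1 := (uw_int P (x + r • z))
    rw [← integrable_tilted_iff (w_int P (x + r • z))] at i1
    have := i1.add (integrable_const (μ := Qm P (x + r • z)) (r • z))
    refine this.congr (Filter.Eventually.of_forall fun y => ?_)
    simp only [Pi.add_apply]; abel
  have hS : Sc P (x + r • z) = ∫ y, (y - x) ∂(Qm P (x + r • z)) - r • z := by
    unfold Sc
    rw [show ∫ y, (y - (x + r • z)) ∂(Qm P (x + r • z)) =
      ∫ y, ((y - x) - r • z) ∂(Qm P (x + r • z)) from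
        integral_congr_ae (Filter.Eventually.of_forall fun y => by simp only []; abel)]
    rw [integral_sub iu (integrable_const _)]
    simp
  set D := ∫ y, (y - x) ∂(Qm P (x + r • z)) - ∫ y, (y - x) ∂(Qm P x) with hD
  have e : Sc P x - Sc P (x + r • z) = r • z - D := by
    rw [hS, hD]; unfold Sc; abel
  have n1 : ‖Sc P x - Sc P (x + r • z)‖ ^ 2 ≤ 2 * (r ^ 2 * ‖z‖ ^ 2) + 2 * ‖D‖ ^ 2 := by
    rw [e]
    have a1 := norm_sub_le (r • z) D
    have a2 : ‖r • z‖ ^ 2 = r ^ 2 * ‖z‖ ^ 2 := by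
      rw [norm_smul, mul_pow, Real.norm_eq_abs, sq_abs]
    rw [← a2]
    have := pow_le_pow_left₀ (norm_nonneg _) a1 2
    nlinarith [sq_nonneg (‖r • z‖ - ‖D‖)]
  have n2 : ‖z‖ ^ 2 ≤ 4 * d * Real.exp (‖z‖ ^ 2 / (4 * d)) := by
    have := Real.add_one_le_exp (‖z‖ ^ 2 / (4 * d))
    have h2 : ‖z‖ ^ 2 = 4 * d * (‖z‖ ^ 2 / (4 * d)) := by field_simp
    calc ‖z‖ ^ 2 = 4 * d * (‖z‖ ^ 2 / (4 * d)) := h2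
      _ ≤ _ := mul_le_mul_of_nonneg_left (by linarith) (by positivity)
  have n3 : ‖D‖ ^ 2 ≤ 4 * r ^ 2 * d ^ 2 * (C0 * ∫ y, Phi d (y - x) z ∂(Qm P x)) := by
    refine main.trans ?_
    rw [mul_pow, hss]
    calc _ = 4 * r ^ 2 * d ^ 2 * ∫ y, h y ^ 8 ∂(Qm P x) := by ring
      _ ≤ _ := by gcongr
  have n4 : r ^ 2 * ‖z‖ ^ 2 ≤ r ^ 2 * (4 * d * Real.exp (‖z‖ ^ 2 / (4 * d))) := by gcongr
  linarith

/-- Posterior expectation of `exp (‖y - x‖² / (4 d))`. -/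
def FF {d : ℕ} (P : Measure (Vec d)) (x : Vec d) : ENNReal :=
  ∫⁻ y, ENNReal.ofReal (Real.exp (‖y - x‖ ^ 2 / (4 * d))) ∂(Qm P x)

lemma W_meas {d : ℕ} (P : Measure (Vec d)) [IsProbabilityMeasure P] :
    Measurable (fun x : Vec d => ∫ y, Real.exp (-‖y - x‖ ^ 2 / 2) ∂P) := by
  have : StronglyMeasurable (fun p : Vec d × Vec d => Real.exp (-‖p.2 - p.1‖ ^ 2 / 2)) := by
    apply Continuous.stronglyMeasurable; fun_prop
  exact (this.integral_prod_right (ν := P)).measurable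

lemma FF_eq {d : ℕ} (P : Measure (Vec d)) (x : Vec d) :
    FF P x = ∫⁻ y, ENNReal.ofReal (Real.exp (-‖y - x‖ ^ 2 / 2) /
      ∫ y, Real.exp (-‖y - x‖ ^ 2 / 2) ∂P) *
      ENNReal.ofReal (Real.exp (‖y - x‖ ^ 2 / (4 * d))) ∂P := by
  unfold FF Qm
  rw [lintegral_tilted]

lemma FF_meas {d : ℕ} (P : Measure (Vec d)) [IsProbabilityMeasure P] : Measurable (FF P) := by
  have e : FF P = fun x => _ := funext (FF_eq P)
  rw [e]
  have hW := W_meas P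
  apply Measurable.lintegral_prod_right'
    (f := fun p : Vec d × Vec d => ENNReal.ofReal (Real.exp (-‖p.2 - p.1‖ ^ 2 / 2) /
      ∫ y, Real.exp (-‖y - p.1‖ ^ 2 / 2) ∂P) *
      ENNReal.ofReal (Real.exp (‖p.2 - p.1‖ ^ 2 / (4 * d))))
  have : Measurable fun p : Vec d × Vec d => ∫ y, Real.exp (-‖y - p.1‖ ^ 2 / 2) ∂P :=
    hW.comp (measurable_fst : Measurable (Prod.fst : Vec d × Vec d → Vec d))
  fun_prop

lemma W_FF {d : ℕ} (P : Measure (Vec d)) [IsProbabilityMeasure P] (x : Vec d) :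
    (∫⁻ y, ENNReal.ofReal (Real.exp (-‖y - x‖ ^ 2 / 2)) ∂P) * FF P x =
      ∫⁻ y, ENNReal.ofReal (Real.exp (-‖y - x‖ ^ 2 / 2)) *
        ENNReal.ofReal (Real.exp (‖y - x‖ ^ 2 / (4 * d))) ∂P := by
  have hpos : 0 < ∫ y, Real.exp (-‖y - x‖ ^ 2 / 2) ∂P := integral_exp_pos (w_int P x)
  rw [FF_eq, ← ofReal_integral_eq_lintegral_ofReal (w_int P x)
    (Filter.Eventually.of_forall fun _ => (Real.exp_pos _).le), ← lintegral_const_mul]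
  · refine lintegral_congr fun y => ?_
    rw [← mul_assoc, ← ENNReal.ofReal_mul hpos.le, mul_div_cancel₀ _ hpos.ne']
  · fun_prop

lemma resample {d : ℕ} (hd : 1 ≤ d) (P : Measure (Vec d)) [IsProbabilityMeasure P] :
    ∫⁻ y, ∫⁻ z, FF P (y + z) ∂(stdGauss d) ∂P ≤ 2 := by
  have hF := FF_meas P
  set c := ENNReal.ofReal ((2 * π) ^ (-(d : ℝ) / 2)) with hc
  have s1 : ∀ y, ∫⁻ z, FF P (y + z) ∂(stdGauss d) =
      c * ∫⁻ x, ENNReal.ofReal (Real.exp (-‖y - x‖ ^ 2 / 2)) * FF P x := by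
    intro y
    rw [lint_std d _ (by fun_prop), ← lintegral_add_left_eq_self
      (fun x => ENNReal.ofReal (Real.exp (-‖y - x‖ ^ 2 / 2)) * FF P x) y]
    simp [hc]
  have s2 : ∀ y : Vec d, ∫⁻ x, ENNReal.ofReal (Real.exp (-‖y - x‖ ^ 2 / 2)) *
        ENNReal.ofReal (Real.exp (‖y - x‖ ^ 2 / (4 * d))) =
      ∫⁻ z : Vec d, ENNReal.ofReal (Real.exp (-‖z‖ ^ 2 / 2)) *
        ENNReal.ofReal (Real.exp (‖z‖ ^ 2 / (4 * d))) := by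
    intro y
    rw [← lintegral_add_left_eq_self (fun x : Vec d =>
      ENNReal.ofReal (Real.exp (-‖y - x‖ ^ 2 / 2)) *
        ENNReal.ofReal (Real.exp (‖y - x‖ ^ 2 / (4 * d)))) y]
    simp
  simp_rw [s1]
  have m1 : Measurable (fun p : Vec d × Vec d =>
      ENNReal.ofReal (Real.exp (-‖p.1 - p.2‖ ^ 2 / 2)) * FF P p.2) := by
    have : Measurable fun p : Vec d × Vec d => FF P p.2 :=
      hF.comp (measurable_snd : Measurable (Prod.snd : Vec d × Vec d → Vec d))
    fun_prop
  rw [lintegral_const_mul _ m1.lintegral_prod_right',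
    lintegral_lintegral_swap (f := fun y x : Vec d =>
      ENNReal.ofReal (Real.exp (-‖y - x‖ ^ 2 / 2)) * FF P x) m1.aemeasurable]
  have s3 : ∀ x : Vec d, ∫⁻ y, ENNReal.ofReal (Real.exp (-‖y - x‖ ^ 2 / 2)) * FF P x ∂P =
      ∫⁻ y, ENNReal.ofReal (Real.exp (-‖y - x‖ ^ 2 / 2)) *
        ENNReal.ofReal (Real.exp (‖y - x‖ ^ 2 / (4 * d))) ∂P := by
    intro x
    rw [lintegral_mul_const _ (by fun_prop), W_FF]
  simp_rw [s3]
  rw [lintegral_lintegral_swap (f := fun x y : Vec d =>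
      ENNReal.ofReal (Real.exp (-‖y - x‖ ^ 2 / 2)) *
        ENNReal.ofReal (Real.exp (‖y - x‖ ^ 2 / (4 * d))))
      (by apply Measurable.aemeasurable; simp only [Function.uncurry_def]; fun_prop)]
  simp_rw [s2]
  rw [lintegral_const, measure_univ, mul_one, hc, ← lint_std d _ (by fun_prop)]
  exact quad_std d hd

lemma Phi_lint {d : ℕ} (hd : 1 ≤ d) (P : Measure (Vec d)) [IsProbabilityMeasure P] (x : Vec d) :
    ∫⁻ z, ENNReal.ofReal (∫ y, Phi d (y - x) z ∂(Qm P x)) ∂(stdGauss d) ≤ 3 * FF P x := by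
  have hd' : (1 : ℝ) ≤ d := by exact_mod_cast hd
  have hs : 0 < √(d : ℝ) := Real.sqrt_pos.2 (by linarith)
  have hss : √(d : ℝ) ^ 2 = d := Real.sq_sqrt (by linarith)
  have e1 : ∀ z, ENNReal.ofReal (∫ y, Phi d (y - x) z ∂(Qm P x)) =
      ∫⁻ y, ENNReal.ofReal (Phi d (y - x) z) ∂(Qm P x) := fun z =>
    ofReal_integral_eq_lintegral_ofReal (Phi_int hd P x z)
      (Filter.Eventually.of_forall fun y => by unfold Phi; positivity)
  simp_rw [e1]
  rw [lintegral_lintegral_swap (by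
    apply Measurable.aemeasurable; simp only [Function.uncurry_def, Phi]; fun_prop)]
  unfold FF
  rw [← lintegral_const_mul _ (by fun_prop)]
  refine lintegral_mono fun y => ?_
  set u := y - x
  have e2 : ∀ z, ENNReal.ofReal (Phi d u z) = ENNReal.ofReal (Real.exp (‖u‖ ^ 2 / (4 * d))) +
      ENNReal.ofReal (Real.exp (inner ℝ ((1 / (2 * √(d : ℝ))) • u) z)) +
      ENNReal.ofReal (Real.exp (inner ℝ (-((1 / (2 * √(d : ℝ))) • u)) z)) := by
    intro z
    unfold Phi
    rw [ENNReal.ofReal_add (by positivity) (by positivity),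
      ENNReal.ofReal_add (by positivity) (by positivity), inner_neg_left, real_inner_smul_left,
      one_div_mul_eq_div]
  show ∫⁻ z, ENNReal.ofReal (Phi d u z) ∂(stdGauss d) ≤ _
  simp_rw [e2]
  rw [lintegral_add_left (by fun_prop), lintegral_add_left (by fun_prop), mgf_std, mgf_std,
    lintegral_const, measure_univ, mul_one, norm_neg]
  have nv : ‖(1 / (2 * √(d : ℝ))) • u‖ ^ 2 / 2 ≤ ‖u‖ ^ 2 / (4 * d) := by
    rw [norm_smul, mul_pow, Real.norm_eq_abs, sq_abs, div_pow, mul_pow, hss]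
    have : 1 ^ 2 / (2 ^ 2 * (d : ℝ)) * ‖u‖ ^ 2 / 2 = ‖u‖ ^ 2 / (4 * d) / 2 := by
      field_simp; ring
    rw [this]
    have : 0 ≤ ‖u‖ ^ 2 / (4 * d) := by positivity
    linarith
  have le1 := ENNReal.ofReal_le_ofReal (Real.exp_le_exp.2 nv)
  calc _ ≤ ENNReal.ofReal (Real.exp (‖u‖ ^ 2 / (4 * d))) +
        ENNReal.ofReal (Real.exp (‖u‖ ^ 2 / (4 * d))) +
        ENNReal.ofReal (Real.exp (‖u‖ ^ 2 / (4 * d))) := by gcongr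
    _ = _ := by ring

lemma inner_bound {d : ℕ} (hd : 1 ≤ d) (P : Measure (Vec d)) [IsProbabilityMeasure P] (x : Vec d)
    (r : ℝ) (hr : 0 ≤ r) (hrd : r * √d ≤ 1 / 32) :
    ∫⁻ z, ENNReal.ofReal (‖Sc P x - Sc P (x + r • z)‖ ^ 2) ∂(stdGauss d) ≤
      ENNReal.ofReal (8 * r ^ 2 * d) * 2 + ENNReal.ofReal (8 * C0 * r ^ 2 * d ^ 2) *
        (3 * FF P x) := by
  have hC : 0 ≤ C0 := by unfold C0; positivity
  calc _ ≤ ∫⁻ z, (ENNReal.ofReal (8 * r ^ 2 * d) *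
          ENNReal.ofReal (Real.exp (‖z‖ ^ 2 / (4 * d))) +
        ENNReal.ofReal (8 * C0 * r ^ 2 * d ^ 2) *
          ENNReal.ofReal (∫ y, Phi d (y - x) z ∂(Qm P x))) ∂(stdGauss d) := by
        refine lintegral_mono fun z => ?_
        rw [← ENNReal.ofReal_mul (by positivity), ← ENNReal.ofReal_mul (by positivity),
          ← ENNReal.ofReal_add (by positivity)]
        · exact ENNReal.ofReal_le_ofReal (Sc_diff hd P x z r hr hrd)
        · apply mul_nonneg (by positivity)
          exact integral_nonneg fun y => by unfold Phi; positivity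
    _ ≤ _ := by
        rw [lintegral_add_left (by fun_prop), lintegral_const_mul _ (by fun_prop),
          lintegral_const_mul' _ _ ENNReal.ofReal_ne_top]
        gcongr
        · exact quad_std d hd
        · exact Phi_lint hd P x

lemma total {d : ℕ} (hd : 1 ≤ d) (P : Measure (Vec d)) [IsProbabilityMeasure P]
    (κ r : ℝ) (hr : 0 ≤ r) (hrd : r * √d ≤ 1 / 32) :
    ∫⁻ ω, ENNReal.ofReal (‖Sc (P.map (κ • ·)) (κ • ω.1 + ω.2.1) -
        Sc (P.map (κ • ·)) (κ • ω.1 + ω.2.1 + r • ω.2.2)‖ ^ 2) ∂(coupleMeasure d P) ≤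
      ENNReal.ofReal (64 * C0 * r ^ 2 * d ^ 2) := by
  have hC : 1 ≤ C0 := by unfold C0; norm_num
  have hd' : (1 : ℝ) ≤ d := by exact_mod_cast hd
  have hmk : Measurable (fun y : Vec d => κ • y) := by fun_prop
  have : IsProbabilityMeasure (P.map (κ • ·)) := Measure.isProbabilityMeasure_map hmk.aemeasurable
  set P' := P.map (κ • ·) with hP'
  have hF := FF_meas P'
  unfold coupleMeasure
  refine (lintegral_prod_le _).trans ?_
  calc _ ≤ ∫⁻ y, ∫⁻ z, (ENNReal.ofReal (8 * r ^ 2 * d) * 2 +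
          ENNReal.ofReal (8 * C0 * r ^ 2 * d ^ 2) * (3 * FF P' (κ • y + z))) ∂(stdGauss d) ∂P := by
        refine lintegral_mono fun y => (lintegral_prod_le _).trans (lintegral_mono fun z => ?_)
        exact inner_bound hd P' (κ • y + z) r hr hrd
    _ = ENNReal.ofReal (8 * r ^ 2 * d) * 2 + ENNReal.ofReal (8 * C0 * r ^ 2 * d ^ 2) *
          (3 * ∫⁻ y, ∫⁻ z, FF P' (y + z) ∂(stdGauss d) ∂P') := by
        have m1 : Measurable (fun p : Vec d × Vec d => FF P' (p.1 + p.2)) := by fun_prop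
        have m2 : Measurable (fun y : Vec d => ∫⁻ z, FF P' (y + z) ∂(stdGauss d)) :=
          m1.lintegral_prod_right'
        have m3 : Measurable (fun y : Vec d => ∫⁻ z, FF P' (κ • y + z) ∂(stdGauss d)) :=
          m2.comp hmk
        have m4 : ∀ y, Measurable (fun z => FF P' (κ • y + z)) := fun y => by fun_prop
        have i1 : ∀ y, ∫⁻ z, (ENNReal.ofReal (8 * r ^ 2 * d) * 2 +
          ENNReal.ofReal (8 * C0 * r ^ 2 * d ^ 2) * (3 * FF P' (κ • y + z))) ∂(stdGauss d) =
          ENNReal.ofReal (8 * r ^ 2 * d) * 2 + ENNReal.ofReal (8 * C0 * r ^ 2 * d ^ 2) *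
            (3 * ∫⁻ z, FF P' (κ • y + z) ∂(stdGauss d)) := by
          intro y
          rw [lintegral_add_left (by fun_prop), lintegral_const, measure_univ, mul_one,
            lintegral_const_mul _ ((m4 y).const_mul 3), lintegral_const_mul _ (m4 y)]
        simp_rw [i1]
        rw [lintegral_add_left (by fun_prop), lintegral_const, measure_univ, mul_one,
            lintegral_const_mul _ (m3.const_mul 3), lintegral_const_mul _ m3, hP',
            lintegral_map m2 hmk]
    _ ≤ ENNReal.ofReal (8 * r ^ 2 * d) * 2 + ENNReal.ofReal (8 * C0 * r ^ 2 * d ^ 2) *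
          (3 * 2) := by
        gcongr
        exact resample hd P'
    _ = ENNReal.ofReal (8 * r ^ 2 * d * 2 + 8 * C0 * r ^ 2 * d ^ 2 * 6) := by
        rw [ENNReal.ofReal_add (by positivity) (by positivity),
          ENNReal.ofReal_mul (p := 8 * r ^ 2 * d) (q := 2) (by positivity),
          ENNReal.ofReal_mul (q := 6) (by positivity)]
        norm_num
    _ ≤ _ := by
        apply ENNReal.ofReal_le_ofReal
        have : r ^ 2 * d ≤ r ^ 2 * (C0 * d ^ 2) := by
          gcongr; nlinarith
        nlinarith

lemma score_formula {d : ℕ} (P : Measure (Vec d)) [IsProbabilityMeasure P] (g : ℝ → ℝ) (t : ℝ)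
    (hv : 0 < sigmaSq g t) (x : Vec d) :
    fwdScore d P g t x = (√(sigmaSq g t))⁻¹ •
      Sc (P.map ((alphaF g 0 t / √(sigmaSq g t)) • ·)) ((√(sigmaSq g t))⁻¹ • x) := by
  set v := sigmaSq g t with hvdef
  set σ := √v with hσ
  have hσp : 0 < σ := Real.sqrt_pos.2 hv
  have hσv : σ ^ 2 = v := Real.sq_sqrt hv.le
  set κ := alphaF g 0 t / σ with hκ
  have hmk : Measurable (fun y : Vec d => κ • y) := by fun_prop
  have : IsProbabilityMeasure (P.map (κ • ·)) := Measure.isProbabilityMeasure_map hmk.aemeasurable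
  set P' := P.map (κ • ·) with hP'
  have hC : 0 < (2 * π * v) ^ (-(d : ℝ) / 2) := by positivity
  have hdens : ∀ z, forwardDensity d P g t z = (2 * π * v) ^ (-(d : ℝ) / 2) *
      ∫ y, Real.exp (-‖y - σ⁻¹ • z‖ ^ 2 / 2) ∂P' := by
    intro z
    unfold forwardDensity
    rw [hP', integral_map hmk.aemeasurable (by
      apply Continuous.aestronglyMeasurable; fun_prop)]
    congr 1
    refine integral_congr_ae (Filter.Eventually.of_forall fun y => ?_)
    have e : κ • y - σ⁻¹ • z = -(σ⁻¹ • (z - alphaF g 0 t • y)) := by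
      rw [smul_sub, smul_smul, neg_sub, hκ, div_eq_inv_mul]
    simp only
    rw [e, norm_neg, norm_smul, mul_pow, Real.norm_eq_abs, sq_abs, inv_pow, hσv]
    congr 1
    rw [← hvdef]
    field_simp
  have hlog : (fun z => Real.log (forwardDensity d P g t z)) = fun z =>
      Real.log ((2 * π * v) ^ (-(d : ℝ) / 2)) +
        Real.log (∫ y, Real.exp (-‖y - σ⁻¹ • z‖ ^ 2 / 2) ∂P') := by
    funext z
    have hpos : 0 < ∫ y, Real.exp (-‖y - σ⁻¹ • z‖ ^ 2 / 2) ∂P' := integral_exp_pos (w_int P' _)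
    rw [hdens, Real.log_mul hC.ne' hpos.ne']
  have h1 := hasGrad P' (σ⁻¹ • x)
  have h2 : HasFDerivAt (fun z : Vec d => σ⁻¹ • z) (σ⁻¹ • ContinuousLinearMap.id ℝ (Vec d)) x :=
    (hasFDerivAt_id x).const_smul σ⁻¹
  have h3 := (h1.comp x h2).const_add (Real.log ((2 * π * v) ^ (-(d : ℝ) / 2)))
  unfold fwdScore scoreOf
  rw [hlog]
  apply HasGradientAt.gradient
  rw [hasGradientAt_iff_hasFDerivAt]
  refine h3.congr_fderiv ?_
  ext w
  simp [real_inner_smul_left]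

theorem statement9 :
    ∃ K : ℝ, 0 < K ∧
      ∀ (d : ℕ) (T t s : ℝ) (P : Measure (Vec d)) (g : ℝ → ℝ),
        IsProbabilityMeasure P →
        ContinuousOn g (Set.Icc 0 T) → (∀ u ∈ Set.Ioc (0 : ℝ) T, 0 < g u) →
        0 < t → t ≤ s → s ≤ T →
        Gvar g t s / sigmaSq g t ≤ 1 / (K * d) →
        (∫ ω, ‖fwdScore d P g t (xt d g t ω) -
              fwdScore d P g t ((alphaF g t s)⁻¹ • xts d g t s ω)‖ ^ 2
            ∂(coupleMeasure d P)) ≤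
          K * d ^ 2 * Gvar g t s / (sigmaSq g t) ^ 2 := by
  have hC : 2048 ≤ C0 := by unfold C0; norm_num
  refine ⟨128 * C0, by positivity, ?_⟩
  intro d T t s P g hP hg hgpos ht hts hsT hG
  rcases Nat.eq_zero_or_pos d with rfl | hd
  · have : ∀ a b : Vec 0, a = b := fun a b => Subsingleton.elim a b
    have e : ∀ a b : Vec 0, ‖a - b‖ ^ 2 = 0 := fun a b => by rw [this a b]; simp
    simp [e]
  have hd' : (1 : ℝ) ≤ d := by exact_mod_cast hd
  have hG0 : 0 ≤ Gvar g t s := intervalIntegral.integral_nonneg hts fun u _ => sq_nonneg _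
  have hGt : 0 < Gvar g 0 t := by
    unfold Gvar
    apply intervalIntegral.intervalIntegral_pos_of_pos_on _ _ ht
    · apply ContinuousOn.intervalIntegrable
      rw [Set.uIcc_of_le ht.le]
      exact (hg.mono (Set.Icc_subset_Icc_right (hts.trans hsT))).pow 2
    · intro u hu
      exact pow_pos (hgpos u ⟨hu.1, hu.2.le.trans (hts.trans hsT)⟩) 2
  have hv : 0 < sigmaSq g t := by
    unfold sigmaSq
    have : Real.exp (-(Gvar g 0 t)) < 1 := by
      rw [← Real.exp_zero]; exact Real.exp_lt_exp.2 (by linarith)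
    linarith
  have hv1 : sigmaSq g t ≤ 1 := by
    unfold sigmaSq
    have := Real.exp_pos (-(Gvar g 0 t))
    linarith
  have hsc := score_formula P g t hv
  set G := Gvar g t s with hGdef
  set v := sigmaSq g t with hvdef
  set σ := √v with hσ
  have hσp : 0 < σ := Real.sqrt_pos.2 hv
  have hσv : σ ^ 2 = v := Real.sq_sqrt hv.le
  set κ := alphaF g 0 t / σ with hκ
  have hαp : 0 < alphaF g t s := Real.exp_pos _
  set α := alphaF g t s with hα
  have hα2 : α ^ 2 = Real.exp (-G) := by
    rw [hα]; unfold alphaF; rw [← Real.exp_nat_mul]; congr 1; push_cast; ring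
  set r := α⁻¹ * √(1 - α ^ 2) / σ with hr
  have hr0 : 0 ≤ r := by positivity
  have hα1 : α ^ 2 ≤ 1 := by rw [hα2]; exact Real.exp_le_one_iff.2 (by linarith)
  have hr2 : r ^ 2 = (Real.exp G - 1) / v := by
    rw [hr, div_pow, mul_pow, Real.sq_sqrt (by linarith), hσv, inv_pow, hα2, Real.exp_neg,
      inv_inv, mul_sub, mul_inv_cancel₀ (Real.exp_pos G).ne', mul_one]
  have hGv : G / v * d ≤ 1 / (128 * C0) := by
    calc G / v * d ≤ 1 / (128 * C0 * d) * d := by gcongr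
      _ = _ := by field_simp
  have hsmall : 1 / (128 * C0) ≤ 1 / 2048 := by
    apply one_div_le_one_div_of_le <;> linarith
  have hGv0 : 0 ≤ G / v := by positivity
  have hG1 : G ≤ 1 := by
    have h1 : G / v ≤ 1 := by nlinarith
    have h2 : G ≤ v := by rwa [div_le_one hv] at h1
    linarith
  have hexp : Real.exp G - 1 ≤ 2 * G := by
    have := Real.abs_exp_sub_one_le (x := G) (by rwa [abs_of_nonneg hG0])
    rw [abs_of_nonneg hG0] at this
    exact (le_abs_self _).trans this
  have hr2' : r ^ 2 ≤ 2 * (G / v) := by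
    rw [hr2, ← mul_div_assoc]; gcongr
  have hrd : r * √d ≤ 1 / 32 := by
    apply le_of_sq_le_sq _ (by norm_num)
    rw [mul_pow, Real.sq_sqrt (by linarith)]
    nlinarith
  have htot := total hd P κ r hr0 hrd
  have hpt : ∀ ω : Vec d × Vec d × Vec d, σ⁻¹ • xt d g t ω = κ • ω.1 + ω.2.1 := by
    intro ω
    unfold xt
    rw [← hvdef, ← hσ, smul_add, smul_smul, smul_smul, inv_mul_cancel₀ hσp.ne', one_smul, hκ,
      div_eq_inv_mul]
  have hpts : ∀ ω : Vec d × Vec d × Vec d,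
      σ⁻¹ • (α⁻¹ • xts d g t s ω) = κ • ω.1 + ω.2.1 + r • ω.2.2 := by
    intro ω
    unfold xts
    rw [← hα, smul_add, smul_smul α⁻¹ α, inv_mul_cancel₀ hαp.ne', one_smul, smul_add, hpt,
      smul_smul, smul_smul, hr]
    congr 2
    field_simp
  set H : Vec d × Vec d × Vec d → ℝ := fun ω => ‖Sc (P.map (κ • ·)) (κ • ω.1 + ω.2.1) -
        Sc (P.map (κ • ·)) (κ • ω.1 + ω.2.1 + r • ω.2.2)‖ ^ 2 with hH
  have hint : ∀ ω, ‖fwdScore d P g t (xt d g t ω) -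
      fwdScore d P g t (α⁻¹ • xts d g t s ω)‖ ^ 2 = v⁻¹ * H ω := by
    intro ω
    rw [hsc, hsc, hpt, hpts, ← smul_sub, norm_smul, mul_pow, Real.norm_eq_abs, sq_abs, inv_pow,
      hσv]
  simp_rw [hint]
  rw [integral_const_mul]
  have hHb : ∫ ω, H ω ∂(coupleMeasure d P) ≤ 64 * C0 * r ^ 2 * d ^ 2 := by
    refine (le_abs_self _).trans ?_
    rw [← Real.norm_eq_abs]
    refine (norm_integral_le_lintegral_norm _).trans ?_
    refine ENNReal.toReal_le_of_le_ofReal (by positivity) ?_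
    refine le_trans (le_of_eq ?_) htot
    refine lintegral_congr fun ω => ?_
    rw [Real.norm_eq_abs, abs_of_nonneg (by positivity)]
  calc v⁻¹ * ∫ ω, H ω ∂(coupleMeasure d P) ≤ v⁻¹ * (64 * C0 * (2 * (G / v)) * d ^ 2) := by
        gcongr
        refine hHb.trans ?_
        gcongr
    _ = _ := by field_simp; ring

end DiffusionKL
end
end

section
/- There is a universal constant C > 0 such that the following holds. Fix k with 1 ≤ k ≤ N and suppose that for every u ∈ [t_{k−1}, t_k] the density p_u is C¹ with ∇log p_u L-Lipschitz on ℝ^d, where L ≥ 1 and G_k ≤ 1. Then for every t ∈ [t_{k−1}, t_k], E‖∇log p_t(x_t) − ∇log p_{t_k}(x_{t_k})‖² ≤ C·d·L²·G_{t,t_k}, where the expectation is over the joint forward coupling of (x_t, x_{t_k}). -/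
open MeasureTheory Real

noncomputable section

namespace DiffusionKL

lemma cosh_lower (u : ℝ) : 1 + u ^ 2 / 2 ≤ Real.cosh u := by
  have h1 : Real.cosh u = 1 + 2 * Real.sinh (u / 2) ^ 2 := by
    have h := Real.cosh_two_mul (u / 2)
    rw [mul_div_cancel₀ u two_ne_zero, Real.cosh_sq'] at h
    rw [h]; ring
  have h2 : |u / 2| ≤ |Real.sinh (u / 2)| := by
    rw [Real.abs_sinh]
    exact Real.self_le_sinh_iff.2 (abs_nonneg _)
  have h3 := sq_le_sq.2 h2
  rw [h1]; nlinarith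

structure Good (d : ℕ) (p : Vec d → ℝ) (s : Vec d → Vec d) (L : ℝ) (μ : Measure (Vec d)) :
    Prop where
  prob : IsProbabilityMeasure μ
  eq : MeasureTheory.volume.withDensity (fun x => ENNReal.ofReal (p x)) = μ
  pc : Continuous p
  sc : Continuous s
  pos : ∀ x, 0 < p x
  L0 : 0 ≤ L
  taylor : ∀ x v, |Real.log (p (x + v)) - Real.log (p x) - inner ℝ (s x) v| ≤ L * ‖v‖ ^ 2

section GoodLemmas

variable {d : ℕ} {p : Vec d → ℝ} {s : Vec d → Vec d} {L : ℝ} {μ : Measure (Vec d)}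

lemma Good.ratio_cont (h : Good d p s L μ) (v : Vec d) :
    Continuous (fun x => p (x + v) / p x) := by
  have h1 := h.pc
  exact (h1.comp (by fun_prop : Continuous fun x : Vec d => x + v)).div h1
    (fun x => (h.pos x).ne')

lemma Good.shift (h : Good d p s L μ) (v : Vec d) :
    μ.withDensity (fun x => ENNReal.ofReal (p (x + v) / p x)) = μ.map (fun x => x - v) := by
  have hpm : Measurable (fun x => ENNReal.ofReal (p x)) := h.pc.measurable.ennreal_ofReal
  have hqm := (h.ratio_cont v).measurable.ennreal_ofReal
  refine Measure.ext_of_lintegral _ fun f hf => ?_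
  rw [lintegral_map hf (by fun_prop), lintegral_withDensity_eq_lintegral_mul _ hqm hf, ← h.eq,
    lintegral_withDensity_eq_lintegral_mul _ hpm (hqm.mul hf),
    lintegral_withDensity_eq_lintegral_mul _ hpm (show Measurable fun x => f (x - v) from by fun_prop),
    ← lintegral_add_right_eq_self (fun x => ((fun x => ENNReal.ofReal (p x)) * fun x => f (x - v)) x) v]
  refine lintegral_congr fun x => ?_
  simp only [Pi.mul_apply, add_sub_cancel_right, ← mul_assoc]
  rw [← ENNReal.ofReal_mul (h.pos x).le, mul_div_cancel₀ _ (h.pos x).ne']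

lemma Good.ratio_eq (h : Good d p s L μ) (x v : Vec d) :
    p (x + v) / p x = Real.exp (Real.log (p (x + v)) - Real.log (p x)) := by
  rw [Real.exp_sub, Real.exp_log (h.pos _), Real.exp_log (h.pos _)]

lemma Good.lint_ratio (h : Good d p s L μ) (v : Vec d) :
    ∫⁻ x, ENNReal.ofReal (p (x + v) / p x) ∂μ = 1 := by
  have := h.prob
  have h1 := congrArg (fun m => m Set.univ) (h.shift v)
  simp only [withDensity_apply _ MeasurableSet.univ, Measure.restrict_univ] at h1
  rw [h1, Measure.map_apply (by fun_prop) MeasurableSet.univ]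
  simp

lemma Good.int_ratio (h : Good d p s L μ) (v : Vec d) :
    Integrable (fun x => p (x + v) / p x) μ ∧ ∫ x, p (x + v) / p x ∂μ = 1 := by
  have h0 : ∀ x, 0 ≤ p (x + v) / p x := fun x => (div_pos (h.pos _) (h.pos _)).le
  have hm : AEStronglyMeasurable (fun x => p (x + v) / p x) μ :=
    (h.ratio_cont v).measurable.aestronglyMeasurable
  constructor
  · rw [← lintegral_ofReal_ne_top_iff_integrable hm (Filter.Eventually.of_forall h0),
      h.lint_ratio v]
    simp
  · rw [integral_eq_lintegral_of_nonneg_ae (Filter.Eventually.of_forall h0) hm, h.lint_ratio v]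
    simp

lemma Good.exp_le (h : Good d p s L μ) (x v : Vec d) :
    Real.exp (inner ℝ (s x) v) ≤ Real.exp (L * ‖v‖ ^ 2) * (p (x + v) / p x) := by
  rw [h.ratio_eq, ← Real.exp_add]
  have := abs_le.1 (h.taylor x v)
  exact Real.exp_le_exp.2 (by linarith)

lemma Good.int_exp (h : Good d p s L μ) (v : Vec d) :
    Integrable (fun x => Real.exp (inner ℝ (s x) v)) μ := by
  refine Integrable.mono' ((h.int_ratio v).1.const_mul (Real.exp (L * ‖v‖ ^ 2))) ?_ ?_
  · have := h.sc
    exact Continuous.aestronglyMeasurable (by fun_prop)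
  · refine Filter.Eventually.of_forall fun x => ?_
    rw [Real.norm_eq_abs, abs_of_pos (Real.exp_pos _)]
    exact h.exp_le x v

lemma Good.int_exp_abs (h : Good d p s L μ) (v : Vec d) :
    Integrable (fun x => Real.exp |inner ℝ (s x) v|) μ := by
  refine Integrable.mono' ((h.int_exp v).add (h.int_exp (-v))) ?_ ?_
  · have := h.sc
    exact Continuous.aestronglyMeasurable (by fun_prop)
  · refine Filter.Eventually.of_forall fun x => ?_
    rw [Real.norm_eq_abs, abs_of_pos (Real.exp_pos _)]
    simp only [Pi.add_apply, inner_neg_right]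
    rcases abs_cases (inner ℝ (s x) v) with ⟨h1, _⟩ | ⟨h1, _⟩ <;> rw [h1]
    · linarith [Real.exp_pos (-inner ℝ (s x) v)]
    · linarith [Real.exp_pos (inner ℝ (s x) v)]

lemma Good.sq_le (h : Good d p s L μ) (x v : Vec d) :
    (inner ℝ (s x) v) ^ 2 ≤ Real.exp (L * ‖v‖ ^ 2) *
      (p (x + v) / p x + p (x + -v) / p x) - 2 := by
  have h1 := h.exp_le x v
  have h2 := h.exp_le x (-v)
  rw [norm_neg, inner_neg_right] at h2
  have h3 := cosh_lower (inner ℝ (s x) v)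
  rw [Real.cosh_eq] at h3
  linarith

lemma Good.int_sq (h : Good d p s L μ) (v : Vec d) :
    Integrable (fun x => (inner ℝ (s x) v) ^ 2) μ ∧
    ∫ x, (inner ℝ (s x) v) ^ 2 ∂μ ≤ 2 * (Real.exp (L * ‖v‖ ^ 2) - 1) := by
  have := h.prob
  have hi : Integrable (fun x => Real.exp (L * ‖v‖ ^ 2) *
      (p (x + v) / p x + p (x + -v) / p x) - 2) μ :=
    (((h.int_ratio v).1.add (h.int_ratio (-v)).1).const_mul _).sub (integrable_const _)
  have hI : Integrable (fun x => (inner ℝ (s x) v) ^ 2) μ := by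
    refine Integrable.mono' hi ?_ ?_
    · have := h.sc
      exact Continuous.aestronglyMeasurable (by fun_prop)
    · refine Filter.Eventually.of_forall fun x => ?_
      rw [Real.norm_eq_abs, abs_of_nonneg (sq_nonneg _)]
      exact h.sq_le x v
  refine ⟨hI, ?_⟩
  refine (integral_mono hI hi (h.sq_le · v)).trans ?_
  have hi2 : Integrable (fun x => Real.exp (L * ‖v‖ ^ 2) *
      (p (x + v) / p x + p (x + -v) / p x)) μ :=
    ((h.int_ratio v).1.add (h.int_ratio (-v)).1).const_mul _
  rw [integral_sub hi2 (integrable_const _),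
    integral_const_mul, integral_add (h.int_ratio v).1 (h.int_ratio (-v)).1,
    (h.int_ratio v).2, (h.int_ratio (-v)).2]
  simp
  linarith

lemma Good.second_moment (h : Good d p s L μ) (hL : 0 < L) :
    Integrable (fun x => ‖s x‖ ^ 2) μ ∧ ∫ x, ‖s x‖ ^ 2 ∂μ ≤ 4 * d * L := by
  let e : Fin d → Vec d := fun i => (Real.sqrt L)⁻¹ • EuclideanSpace.single i (1 : ℝ)
  have hsq : Real.sqrt L ^ 2 = L := Real.sq_sqrt hL.le
  have hs0 : 0 < Real.sqrt L := Real.sqrt_pos.2 hL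
  have he : ∀ i, ‖e i‖ ^ 2 = L⁻¹ := by
    intro i
    simp only [e, norm_smul, PiLp.norm_single, norm_inv, Real.norm_eq_abs,
      abs_of_pos hs0]
    rw [mul_pow, inv_pow, hsq]; simp
  have hsum : ∀ x, ‖s x‖ ^ 2 = ∑ i, L * (inner ℝ (s x) (e i)) ^ 2 := by
    intro x
    rw [EuclideanSpace.norm_sq_eq]
    refine Finset.sum_congr rfl fun i _ => ?_
    simp only [e, inner_smul_right, EuclideanSpace.inner_single_right]
    rw [mul_pow, inv_pow, hsq]
    simp; field_simp
  simp_rw [hsum]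
  constructor
  · exact integrable_finsetSum _ fun i _ => (h.int_sq (e i)).1.const_mul _
  · rw [integral_finsetSum _ fun i _ => (h.int_sq (e i)).1.const_mul _]
    have hb : ∀ i ∈ Finset.univ, ∫ x, L * (inner ℝ (s x) (e i)) ^ 2 ∂μ ≤ 4 * L := by
      intro i _
      rw [integral_const_mul]
      have h1 := (h.int_sq (e i)).2
      rw [he i, mul_inv_cancel₀ hL.ne'] at h1
      have h2 := Real.exp_one_lt_d9
      nlinarith
    refine (Finset.sum_le_sum hb).trans ?_
    simp; linarith

lemma Good.D_bound (h : Good d p s L μ) (e x : Vec d) {r : ℝ} (hr : 0 < r) (hr1 : r ≤ 1) :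
    |(p (x + r • e) / p x - 1) / r| ≤
      Real.exp (2 * L * ‖e‖ ^ 2) * Real.exp |inner ℝ (s x) ((2 : ℝ) • e)| := by
  have ht := h.taylor x (r • e)
  rw [h.ratio_eq]
  set w := Real.log (p (x + r • e)) - Real.log (p x)
  set u := (inner ℝ (s x) e : ℝ) with hu
  have hL0 := h.L0
  rw [inner_smul_right, ← hu, norm_smul, Real.norm_eq_abs, abs_of_pos hr] at ht
  rw [inner_smul_right, ← hu, abs_mul, abs_of_pos (two_pos (α := ℝ)), ← Real.exp_add]
  set b := |u| + L * ‖e‖ ^ 2 with hb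
  have hLe : 0 ≤ L * ‖e‖ ^ 2 := by positivity
  have hb0 : 0 ≤ b := by positivity
  have hw : |w| ≤ r * b := by
    have h1 : |w| ≤ |w - r * u| + |r * u| := by
      have := abs_add_le (w - r * u) (r * u); simpa using this
    rw [abs_mul r u, abs_of_pos hr] at h1
    have h2 : L * (r * ‖e‖) ^ 2 ≤ r * (L * ‖e‖ ^ 2) := by
      have : L * (r * ‖e‖) ^ 2 = r * (r * (L * ‖e‖ ^ 2)) := by ring
      rw [this]
      exact mul_le_mul_of_nonneg_left (mul_le_of_le_one_left hLe hr1) hr.le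
    rw [hb]; linarith
  have hwb : |w| ≤ b := hw.trans (mul_le_of_le_one_left hb0 hr1)
  have hexp : |Real.exp w - 1| ≤ |w| * Real.exp |w| := by
    rw [abs_le]
    have h1 := Real.add_one_le_exp w
    have h2 := Real.add_one_le_exp (-w)
    have h3 := Real.exp_pos w
    have h5 : Real.exp w * Real.exp (-w) = 1 := by rw [← Real.exp_add]; simp
    have h4 : Real.exp w ≤ Real.exp |w| := Real.exp_le_exp.2 (le_abs_self w)
    have h6 : 1 ≤ Real.exp |w| := Real.one_le_exp (abs_nonneg w)
    have h7 := neg_abs_le w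
    have h8 := le_abs_self w
    have h9 := abs_nonneg w
    constructor
    · nlinarith
    · have : Real.exp w - 1 ≤ w * Real.exp w := by nlinarith
      have h10 : w * Real.exp w ≤ |w| * Real.exp w := mul_le_mul_of_nonneg_right h8 h3.le
      have h11 : |w| * Real.exp w ≤ |w| * Real.exp |w| := mul_le_mul_of_nonneg_left h4 h9
      linarith
  rw [abs_div, abs_of_pos hr, div_le_iff₀ hr]
  calc |Real.exp w - 1| ≤ |w| * Real.exp |w| := hexp
    _ ≤ (r * b) * Real.exp b := by gcongr
    _ ≤ (r * Real.exp b) * Real.exp b := by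
        gcongr; linarith [Real.add_one_le_exp b]
    _ = Real.exp (b + b) * r := by rw [Real.exp_add b b]; ring
    _ = _ := by congr 2; rw [hb]; ring

lemma Good.D_tendsto (h : Good d p s L μ) (e x : Vec d) :
    Filter.Tendsto (fun n : ℕ => (p (x + ((1 : ℝ) / (n + 1)) • e) / p x - 1) / ((1 : ℝ) / (n + 1)))
      Filter.atTop (nhds (inner ℝ (s x) e)) := by
  have h1 : HasDerivAt (fun r : ℝ => Real.log (p (x + r • e)) - Real.log (p x))
      (inner ℝ (s x) e) 0 := by
    rw [hasDerivAt_iff_isLittleO_nhds_zero]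
    refine Asymptotics.IsBigO.trans_isLittleO (g := fun r : ℝ => r ^ 2) ?_
      (Asymptotics.isLittleO_pow_id one_lt_two)
    refine Asymptotics.IsBigO.of_bound (L * ‖e‖ ^ 2) (Filter.Eventually.of_forall fun r => ?_)
    have ht := h.taylor x (r • e)
    rw [inner_smul_right, norm_smul, mul_pow] at ht
    simp only [zero_add, zero_smul, add_zero, sub_self, sub_zero, smul_eq_mul, norm_pow]
    rw [Real.norm_eq_abs (_ - _)]
    linarith
  have h2 := h1.exp
  simp only [← h.ratio_eq] at h2
  rw [hasDerivAt_iff_tendsto_slope] at h2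
  have h3 : Filter.Tendsto (fun n : ℕ => (1 : ℝ) / (n + 1)) Filter.atTop
      (nhdsWithin 0 {0}ᶜ) := by
    refine tendsto_nhdsWithin_iff.2 ⟨tendsto_one_div_add_atTop_nhds_zero_nat,
      Filter.Eventually.of_forall fun n => ?_⟩
    have : (0 : ℝ) < 1 / (n + 1) := by positivity
    exact this.ne'
  have h4 := h2.comp h3
  have hp := (h.pos x).ne'
  simp only [zero_smul, add_zero, div_self hp, one_mul] at h4
  refine h4.congr fun n => ?_
  simp [slope_def_field, div_self hp]

lemma Good.dom_memLp (h : Good d p s L μ) (e : Vec d) :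
    MemLp (fun x => Real.exp (2 * L * ‖e‖ ^ 2) * Real.exp |inner ℝ (s x) ((2 : ℝ) • e)|) 2 μ := by
  have hsc := h.sc
  refine (MemLp.const_mul ?_ _)
  rw [memLp_two_iff_integrable_sq (Continuous.aestronglyMeasurable (by fun_prop))]
  refine (h.int_exp_abs ((4 : ℝ) • e)).congr (Filter.Eventually.of_forall fun x => ?_)
  simp only [inner_smul_right, abs_mul]
  rw [← Real.exp_nat_mul]
  congr 1
  norm_num
  ring

lemma Good.lim {Ω : Type*} [MeasurableSpace Ω] {ρ : Measure Ω} {X : Ω → Vec d}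
    (h : Good d p s L μ) (hX : MeasurePreserving X ρ μ) (e : Vec d) {G : Ω → ℝ} (hG : MemLp G 2 ρ) :
    (∀ n : ℕ, Integrable (fun ω => G ω *
      ((p (X ω + ((1 : ℝ) / (n + 1)) • e) / p (X ω) - 1) / ((1 : ℝ) / (n + 1)))) ρ) ∧
    Filter.Tendsto (fun n : ℕ => ∫ ω, G ω *
      ((p (X ω + ((1 : ℝ) / (n + 1)) • e) / p (X ω) - 1) / ((1 : ℝ) / (n + 1))) ∂ρ)
      Filter.atTop (nhds (∫ ω, G ω * inner ℝ (s (X ω)) e ∂ρ)) := by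
  have hdom := (h.dom_memLp e).comp_measurePreserving hX
  have hint : Integrable (fun ω => ‖G ω‖ * (Real.exp (2 * L * ‖e‖ ^ 2) *
      Real.exp |inner ℝ (s (X ω)) ((2 : ℝ) • e)|)) ρ := hG.norm.integrable_mul hdom
  have hmeas : ∀ n : ℕ, AEStronglyMeasurable (fun ω => G ω *
      ((p (X ω + ((1 : ℝ) / (n + 1)) • e) / p (X ω) - 1) / ((1 : ℝ) / (n + 1)))) ρ := by
    intro n
    refine hG.1.mul ?_
    have := (((h.ratio_cont (((1 : ℝ) / (n + 1)) • e)).sub (continuous_const (y := (1 : ℝ)))).div_const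
      ((1 : ℝ) / (n + 1))).measurable.comp hX.measurable
    exact this.aestronglyMeasurable
  have hbd : ∀ n : ℕ, ∀ ω, ‖G ω *
      ((p (X ω + ((1 : ℝ) / (n + 1)) • e) / p (X ω) - 1) / ((1 : ℝ) / (n + 1)))‖ ≤
      ‖G ω‖ * (Real.exp (2 * L * ‖e‖ ^ 2) * Real.exp |inner ℝ (s (X ω)) ((2 : ℝ) • e)|) := by
    intro n ω
    rw [norm_mul]
    refine mul_le_mul_of_nonneg_left ?_ (norm_nonneg _)
    refine h.D_bound e (X ω) (by positivity) ?_
    rw [div_le_one (by positivity)]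
    linarith [(Nat.cast_nonneg n : (0 : ℝ) ≤ n)]
  refine ⟨fun n => hint.mono' (hmeas n) (Filter.Eventually.of_forall (hbd n)), ?_⟩
  refine tendsto_integral_of_dominated_convergence _ hmeas hint
    (fun n => Filter.Eventually.of_forall (hbd n)) (Filter.Eventually.of_forall fun ω => ?_)
  exact (h.D_tendsto e (X ω)).const_mul _

end GoodLemmas

lemma score_hasDerivAt {d : ℕ} {p : Vec d → ℝ} (hp : ContDiff ℝ 1 p) (x v : Vec d) (τ : ℝ)
    (h0 : p (x + τ • v) ≠ 0) :
    HasDerivAt (fun r : ℝ => Real.log (p (x + r • v))) (inner ℝ (scoreOf p (x + τ • v)) v) τ := by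
  have hd : DifferentiableAt ℝ p (x + τ • v) := (hp.differentiable one_ne_zero) _
  have h1 : DifferentiableAt ℝ (fun z => Real.log (p z)) (x + τ • v) := hd.log h0
  have h2 := h1.hasGradientAt.hasFDerivAt
  have h3 : HasDerivAt (fun r : ℝ => x + r • v) v τ := by
    simpa using ((hasDerivAt_id τ).smul_const v).const_add x
  have h4 := h2.comp_hasDerivAt τ h3
  simpa [scoreOf, Function.comp_def] using h4

lemma dens_hasDerivAt {d : ℕ} {p : Vec d → ℝ} (hp : ContDiff ℝ 1 p) (x v : Vec d) (τ : ℝ) :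
    HasDerivAt (fun r : ℝ => p (x + r • v)) (fderiv ℝ p (x + τ • v) v) τ := by
  have hd : DifferentiableAt ℝ p (x + τ • v) := (hp.differentiable one_ne_zero) _
  have h3 : HasDerivAt (fun r : ℝ => x + r • v) v τ := by
    simpa using ((hasDerivAt_id τ).smul_const v).const_add x
  exact hd.hasFDerivAt.comp_hasDerivAt τ h3

lemma dens_pos {d : ℕ} {p : Vec d → ℝ} {K : NNReal} (hp : ContDiff ℝ 1 p)
    (hs : LipschitzWith K (scoreOf p)) (x0 : Vec d) (hx0 : 0 < p x0) (y : Vec d) : 0 < p y := by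
  set v := y - x0 with hv
  let M : ℝ := (‖scoreOf p x0‖ + K * ‖v‖) * ‖v‖ + 1
  have hM : ∀ τ ∈ Set.Ico (0 : ℝ) 1, |inner ℝ (scoreOf p (x0 + τ • v)) v| < M := by
    intro τ hτ
    have h1 := abs_real_inner_le_norm (scoreOf p (x0 + τ • v)) v
    have h2 := hs.dist_le_mul (x0 + τ • v) x0
    rw [dist_eq_norm, dist_eq_norm, add_sub_cancel_left, norm_smul, Real.norm_eq_abs,
      abs_of_nonneg hτ.1] at h2
    have h3 : ‖scoreOf p (x0 + τ • v)‖ ≤ ‖scoreOf p x0‖ + K * ‖v‖ := by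
      have h4 : ‖scoreOf p (x0 + τ • v)‖ ≤ ‖scoreOf p x0‖
          + ‖scoreOf p (x0 + τ • v) - scoreOf p x0‖ := by
        have := norm_add_le (scoreOf p x0) (scoreOf p (x0 + τ • v) - scoreOf p x0)
        simpa using this
      have h5 : (K : ℝ) * (τ * ‖v‖) ≤ K * ‖v‖ := by
        gcongr
        exact mul_le_of_le_one_left (norm_nonneg _) hτ.2.le
      linarith
    have h6 := mul_le_mul_of_nonneg_right h3 (norm_nonneg v)
    simp only [M]; linarith
  have key := image_le_of_deriv_right_lt_deriv_boundary (f := fun τ : ℝ => - p (x0 + τ • v))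
    (f' := fun τ => -(fderiv ℝ p (x0 + τ • v) v)) (a := 0) (b := 1)
    (B := fun τ => -(p x0 * Real.exp (-M * τ)))
    (B' := fun τ => M * (p x0 * Real.exp (-M * τ)))
    (by have := hp.continuous; fun_prop)
    (fun τ _ => (dens_hasDerivAt hp x0 v τ).neg.hasDerivWithinAt)
    (by simp)
    (fun τ => by
      have h1 : HasDerivAt (fun τ : ℝ => -M * τ) (-M) τ := by
        simpa using (hasDerivAt_id τ).const_mul (-M)
      have h2 := (h1.exp.const_mul (p x0)).neg
      exact h2.congr_deriv (by ring))
    (by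
      intro τ hτ heq
      have heq' : p (x0 + τ • v) = p x0 * Real.exp (-M * τ) := by linarith
      have hpos : 0 < p (x0 + τ • v) := by rw [heq']; positivity
      have h1 := (dens_hasDerivAt hp x0 v τ).log hpos.ne'
      have h2 := h1.unique (score_hasDerivAt hp x0 v τ hpos.ne')
      rw [div_eq_iff hpos.ne'] at h2
      rw [h2, ← heq']
      have h3 := (abs_lt.1 (hM τ hτ)).1
      nlinarith)
  have := key (Set.right_mem_Icc.2 zero_le_one)
  simp only [one_smul, hv, add_sub_cancel, mul_one] at this
  have h2 : 0 < p x0 * Real.exp (-M) := by positivity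
  linarith

lemma good_of_lip {d : ℕ} {p : Vec d → ℝ} {L : ℝ} {μ : Measure (Vec d)}
    (hμ : IsProbabilityMeasure μ)
    (heq : MeasureTheory.volume.withDensity (fun x => ENNReal.ofReal (p x)) = μ)
    (hp : ContDiff ℝ 1 p) (hL : 0 ≤ L) (hs : LipschitzWith (Real.toNNReal L) (scoreOf p)) :
    Good d p (scoreOf p) L μ := by
  have hex : ∃ x0, 0 < p x0 := by
    by_contra hcon
    push Not at hcon
    have h1 : (fun x => ENNReal.ofReal (p x)) = fun _ => 0 := by
      funext x; exact ENNReal.ofReal_of_nonpos (hcon x)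
    have h2 : μ Set.univ = 1 := measure_univ
    rw [← heq, h1] at h2
    simp at h2
  obtain ⟨x0, hx0⟩ := hex
  have hpos := dens_pos hp hs x0 hx0
  refine ⟨hμ, heq, hp.continuous, hs.continuous, hpos, hL, fun x v => ?_⟩
  have hder : ∀ τ ∈ Set.Icc (0 : ℝ) 1, HasDerivWithinAt
      (fun r : ℝ => Real.log (p (x + r • v)) - r * inner ℝ (scoreOf p x) v)
      (inner ℝ (scoreOf p (x + τ • v)) v - inner ℝ (scoreOf p x) v) (Set.Icc 0 1) τ := by
    intro τ _
    have h1 := score_hasDerivAt hp x v τ (hpos _).ne'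
    have h2 := (hasDerivAt_id τ).mul_const (inner ℝ (scoreOf p x) v)
    rw [one_mul] at h2
    exact (h1.sub h2).hasDerivWithinAt
  have hbd : ∀ τ ∈ Set.Icc (0 : ℝ) 1,
      ‖inner ℝ (scoreOf p (x + τ • v)) v - inner ℝ (scoreOf p x) v‖ ≤ L * ‖v‖ ^ 2 := by
    intro τ hτ
    rw [← inner_sub_left]
    have h2 := hs.dist_le_mul (x + τ • v) x
    rw [dist_eq_norm, dist_eq_norm, add_sub_cancel_left, norm_smul, Real.norm_eq_abs,
      abs_of_nonneg hτ.1, Real.coe_toNNReal _ hL] at h2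
    have h3 : L * (τ * ‖v‖) ≤ L * ‖v‖ := by
      gcongr
      exact mul_le_of_le_one_left (norm_nonneg _) hτ.2
    refine (norm_inner_le_norm _ _).trans ?_
    have := mul_le_mul_of_nonneg_right (h2.trans h3) (norm_nonneg v)
    linarith
  have := (convex_Icc (0 : ℝ) 1).norm_image_sub_le_of_norm_hasDerivWithin_le hder hbd
    (Set.left_mem_Icc.2 zero_le_one) (Set.right_mem_Icc.2 zero_le_one)
  simp only [one_smul, zero_smul, add_zero, one_mul, zero_mul, sub_zero, norm_one, mul_one,
    Real.norm_eq_abs] at this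
  convert this using 2
  ring

/-- Orthogonality, scalar version. -/
lemma orth_scalar {d : ℕ} {p q : Vec d → ℝ} {s s' : Vec d → Vec d} {L L' a b : ℝ}
    {μ ν γ : Measure (Vec d)} [IsProbabilityMeasure γ]
    (hp : Good d p s L μ) (hq : Good d q s' L' ν)
    (hmap : MeasurePreserving (fun z : Vec d × Vec d => a • z.1 + b • z.2) (μ.prod γ) ν)
    (e : Vec d) {g : Vec d → ℝ} (hg : Continuous g)
    (hg2 : MemLp (fun z : Vec d × Vec d => g (a • z.1 + b • z.2)) 2 (μ.prod γ)) :
    ∫ z : Vec d × Vec d, g (a • z.1 + b • z.2) * inner ℝ (s z.1) e ∂(μ.prod γ) =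
    ∫ z : Vec d × Vec d, g (a • z.1 + b • z.2) * inner ℝ (s' (a • z.1 + b • z.2)) (a • e)
      ∂(μ.prod γ) := by
  have := hp.prob
  have := hq.prob
  have h1 := hp.lim (measurePreserving_fst (μ := μ) (ν := γ)) e hg2
  have h2 := hq.lim hmap (a • e) hg2
  refine tendsto_nhds_unique h1.2 (h2.2.congr fun n => ?_)
  have hr : (0 : ℝ) < 1 / ((n : ℝ) + 1) := by positivity
  have i1 := h1.1 n
  have i2 := h2.1 n
  set r := (1 : ℝ) / ((n : ℝ) + 1)
  have ig : Integrable (fun z : Vec d × Vec d => g (a • z.1 + b • z.2)) (μ.prod γ) :=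
    hg2.integrable one_le_two
  -- the exact identity for finite shifts
  have key : ∫ z : Vec d × Vec d, g (a • z.1 + b • z.2) * (p (z.1 + r • e) / p z.1) ∂(μ.prod γ) =
      ∫ z : Vec d × Vec d, g (a • z.1 + b • z.2) *
        (q (a • z.1 + b • z.2 + r • a • e) / q (a • z.1 + b • z.2)) ∂(μ.prod γ) := by
    have hm1 := (hp.ratio_cont (r • e)).measurable.ennreal_ofReal
    have hm2 := (hq.ratio_cont (r • a • e)).measurable.ennreal_ofReal
    have hY : Measurable (fun z : Vec d × Vec d => a • z.1 + b • z.2) := by fun_prop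
    have hmeas : ((μ.prod γ).withDensity
        (fun z => ENNReal.ofReal (p (z.1 + r • e) / p z.1))).map
          (fun z : Vec d × Vec d => a • z.1 + b • z.2) =
        ν.withDensity (fun y => ENNReal.ofReal (q (y + r • a • e) / q y)) := by
      rw [← prod_withDensity_left hm1, hp.shift, hq.shift, ← hmap.map_eq,
        Measure.map_map (by fun_prop) hY]
      have : (μ.map (fun x => x - r • e)).prod γ =
          (μ.prod γ).map (Prod.map (fun x => x - r • e) id) := by
        rw [← Measure.map_prod_map _ _ (by fun_prop) measurable_id, Measure.map_id]
      rw [this, Measure.map_map hY (by fun_prop)]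
      congr 1
      funext z
      simp only [Function.comp, Prod.map, id, smul_sub, smul_comm a r e]
      abel
    have e1 := congrArg (fun m => ∫ y, g y ∂m) hmeas
    rw [integral_map hY.aemeasurable hg.aestronglyMeasurable,
      integral_withDensity_eq_integral_toReal_smul (show Measurable fun z : Vec d × Vec d =>
          ENNReal.ofReal (p (z.1 + r • e) / p z.1) from hm1.comp measurable_fst)
        (Filter.Eventually.of_forall fun _ => ENNReal.ofReal_lt_top),
      integral_withDensity_eq_integral_toReal_smul hm2
        (Filter.Eventually.of_forall fun _ => ENNReal.ofReal_lt_top),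
      ← hmap.map_eq, integral_map hY.aemeasurable] at e1
    · refine Eq.trans ?_ (e1.trans ?_) <;> refine integral_congr_ae (Filter.Eventually.of_forall
        fun z => ?_)
      · simp only [smul_eq_mul]
        rw [ENNReal.toReal_ofReal (div_pos (hp.pos _) (hp.pos _)).le, mul_comm]
      · simp only [smul_eq_mul]
        rw [ENNReal.toReal_ofReal (div_pos (hq.pos _) (hq.pos _)).le, mul_comm]
    · exact (hm2.ennreal_toReal.smul hg.measurable).aestronglyMeasurable
  have k1 : ∀ (f : Vec d × Vec d → ℝ), Integrable (fun z => g (a • z.1 + b • z.2) *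
      ((f z - 1) / r)) (μ.prod γ) → ∫ z, g (a • z.1 + b • z.2) * ((f z - 1) / r) ∂(μ.prod γ) =
      (∫ z, g (a • z.1 + b • z.2) * f z ∂(μ.prod γ) -
        ∫ z, g (a • z.1 + b • z.2) ∂(μ.prod γ)) / r := by
    intro f hf
    have : ∫ z, g (a • z.1 + b • z.2) * f z ∂(μ.prod γ) =
        ∫ z, (r * (g (a • z.1 + b • z.2) * ((f z - 1) / r)) + g (a • z.1 + b • z.2))
          ∂(μ.prod γ) := by
      congr 1; funext z; field_simp; ring
    rw [this, integral_add (hf.const_mul r) ig, integral_const_mul]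
    field_simp
    ring
  rw [k1 _ i1, k1 _ i2, key]

lemma integral_add3 {Ω : Type*} [MeasurableSpace Ω] {ρ : Measure Ω} {f g h : Ω → ℝ}
    (hf : Integrable f ρ) (hg : Integrable g ρ) (hh : Integrable h ρ) :
    ∫ z, (f z + (g z + h z)) ∂ρ = ∫ z, f z ∂ρ + (∫ z, g z ∂ρ + ∫ z, h z ∂ρ) := by
  have h1 : Integrable (fun z => g z + h z) ρ := hg.add hh
  rw [integral_add hf h1, integral_add hg hh]

lemma orth_vec {d : ℕ} {p q : Vec d → ℝ} {s s' : Vec d → Vec d} {L L' a b : ℝ}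
    {μ ν γ : Measure (Vec d)} [IsProbabilityMeasure γ]
    (hp : Good d p s L μ) (hq : Good d q s' L' ν)
    (hmap : MeasurePreserving (fun z : Vec d × Vec d => a • z.1 + b • z.2) (μ.prod γ) ν)
    (hA : MemLp (fun z : Vec d × Vec d => s z.1) 2 (μ.prod γ))
    (hS : MemLp (fun z : Vec d × Vec d => s' (a • z.1 + b • z.2)) 2 (μ.prod γ))
    {h : Vec d → Vec d} (hh : Continuous h)
    (hh2 : MemLp (fun z : Vec d × Vec d => h (a • z.1 + b • z.2)) 2 (μ.prod γ)) :
    ∫ z : Vec d × Vec d, inner ℝ (s z.1 - a • s' (a • z.1 + b • z.2)) (h (a • z.1 + b • z.2))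
      ∂(μ.prod γ) = 0 := by
  have hcoord : ∀ i, MemLp (fun z : Vec d × Vec d => h (a • z.1 + b • z.2) i) 2 (μ.prod γ) := by
    intro i
    have := hh2.inner_const (𝕜 := ℝ) (EuclideanSpace.single i (1 : ℝ))
    simpa [EuclideanSpace.inner_single_right] using this
  have i1 : ∀ i : Fin d, Integrable (fun z : Vec d × Vec d => h (a • z.1 + b • z.2) i *
      inner ℝ (s z.1) (EuclideanSpace.single i (1 : ℝ))) (μ.prod γ) := fun i =>
    (hcoord i).integrable_mul (hA.inner_const (𝕜 := ℝ) (EuclideanSpace.single i (1 : ℝ)))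
  have i2 : ∀ i : Fin d, Integrable (fun z : Vec d × Vec d => h (a • z.1 + b • z.2) i *
      inner ℝ (s' (a • z.1 + b • z.2)) (a • EuclideanSpace.single i (1 : ℝ))) (μ.prod γ) :=
    fun i => (hcoord i).integrable_mul
      (hS.inner_const (𝕜 := ℝ) (a • EuclideanSpace.single i (1 : ℝ)))
  have hexp : ∀ z : Vec d × Vec d,
      inner ℝ (s z.1 - a • s' (a • z.1 + b • z.2)) (h (a • z.1 + b • z.2)) =
      ∑ i, (h (a • z.1 + b • z.2) i * inner ℝ (s z.1) (EuclideanSpace.single i (1 : ℝ)) -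
        h (a • z.1 + b • z.2) i *
          inner ℝ (s' (a • z.1 + b • z.2)) (a • EuclideanSpace.single i (1 : ℝ))) := by
    intro z
    simp only [PiLp.inner_apply, inner_smul_right]
    refine Finset.sum_congr rfl fun i _ => ?_
    simp
    ring
  simp_rw [hexp]
  have i3 : ∀ i : Fin d, Integrable (fun z : Vec d × Vec d => h (a • z.1 + b • z.2) i *
      inner ℝ (s z.1) (EuclideanSpace.single i (1 : ℝ)) - h (a • z.1 + b • z.2) i *
      inner ℝ (s' (a • z.1 + b • z.2)) (a • EuclideanSpace.single i (1 : ℝ))) (μ.prod γ) :=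
    fun i => (i1 i).sub (i2 i)
  rw [integral_finsetSum _ fun i _ => i3 i]
  refine Finset.sum_eq_zero fun i _ => ?_
  rw [integral_sub (i1 i) (i2 i), sub_eq_zero]
  exact orth_scalar hp hq hmap _ (g := fun y => h y i) (by fun_prop) (hcoord i)

lemma core {d : ℕ} {p q : Vec d → ℝ} {s s' : Vec d → Vec d} {L a b : ℝ}
    {μ ν γ : Measure (Vec d)} [IsProbabilityMeasure γ] (hL : 0 < L)
    (hp : Good d p s L μ) (hq : Good d q s' L ν)
    (hmap : MeasurePreserving (fun z : Vec d × Vec d => a • z.1 + b • z.2) (μ.prod γ) ν)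
    (hlip : ∀ x y, ‖s x - s y‖ ≤ L * ‖x - y‖) (ha : 0 < a)
    (hγ : Integrable (fun z : Vec d => ‖z‖ ^ 2) γ) (hγ2 : ∫ z, ‖z‖ ^ 2 ∂γ ≤ 4 * d) :
    ∫ z : Vec d × Vec d, ‖s z.1 - s' (a • z.1 + b • z.2)‖ ^ 2 ∂(μ.prod γ) ≤
      (L * (b / a)) ^ 2 * (4 * d) + (1 - a) ^ 2 * (4 * d * L) := by
  have := hp.prob
  have := hq.prob
  have hsc := hp.sc
  have hsc' := hq.sc
  have mA : MemLp (fun z : Vec d × Vec d => s z.1) 2 (μ.prod γ) := by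
    have : MemLp s 2 μ := (memLp_two_iff_integrable_sq_norm hsc.aestronglyMeasurable).2
      (hp.second_moment hL).1
    exact this.comp_measurePreserving measurePreserving_fst
  have mZ : MemLp (fun z : Vec d × Vec d => z.2) 2 (μ.prod γ) := by
    have : MemLp (fun z : Vec d => z) 2 γ :=
      (memLp_two_iff_integrable_sq_norm continuous_id.aestronglyMeasurable).2 hγ
    exact this.comp_measurePreserving measurePreserving_snd
  have mS' : MemLp s' 2 ν := (memLp_two_iff_integrable_sq_norm hsc'.aestronglyMeasurable).2
      (hq.second_moment hL).1
  have mS : MemLp (fun z : Vec d × Vec d => s' (a • z.1 + b • z.2)) 2 (μ.prod γ) :=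
    mS'.comp_measurePreserving hmap
  have hAF : ∀ z : Vec d × Vec d, ‖s z.1 - s (a⁻¹ • (a • z.1 + b • z.2))‖ ≤
      ‖(L * (b / a)) • z.2‖ := by
    intro z
    refine (hlip _ _).trans (le_of_eq ?_)
    rw [smul_add, smul_smul, smul_smul, inv_mul_cancel₀ ha.ne', one_smul, norm_smul, ← sub_sub,
      sub_self, zero_sub, norm_neg, norm_smul, norm_mul L, Real.norm_of_nonneg hL.le,
      inv_mul_eq_div, mul_assoc]
  have mAF : MemLp (fun z : Vec d × Vec d => s z.1 - s (a⁻¹ • (a • z.1 + b • z.2))) 2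
      (μ.prod γ) := by
    refine MemLp.of_le (mZ.const_smul (L * (b / a)))
      (Continuous.aestronglyMeasurable (by fun_prop)) (Filter.Eventually.of_forall hAF)
  have mh1 : MemLp (fun z : Vec d × Vec d => a • s' (a • z.1 + b • z.2) -
      s (a⁻¹ • (a • z.1 + b • z.2))) 2 (μ.prod γ) := by
    have := (mS.const_smul a).add (mAF.sub mA)
    refine this.ae_eq (Filter.Eventually.of_forall fun z => ?_)
    simp only [Pi.add_apply, Pi.sub_apply, Pi.smul_apply]
    abel
  have mU : MemLp (fun z : Vec d × Vec d => s z.1 - a • s' (a • z.1 + b • z.2)) 2 (μ.prod γ) :=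
    mA.sub (mS.const_smul a)
  have o1 := orth_vec hp hq hmap mA mS (h := fun y => a • s' y - s (a⁻¹ • y)) (by fun_prop) mh1
  have o2 := orth_vec hp hq hmap mA mS (h := s') hsc' mS
  have sqi : ∀ {f : Vec d × Vec d → Vec d}, MemLp f 2 (μ.prod γ) →
      Integrable (fun z => ‖f z‖ ^ 2) (μ.prod γ) := fun hf =>
    (memLp_two_iff_integrable_sq_norm hf.1).1 hf
  have ini : ∀ {f g : Vec d × Vec d → Vec d}, MemLp f 2 (μ.prod γ) → MemLp g 2 (μ.prod γ) →
      Integrable (fun z => inner ℝ (f z) (g z)) (μ.prod γ) := by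
    intro f g hf hg
    refine Integrable.mono' (hf.norm.integrable_mul hg.norm) (hf.1.inner hg.1)
      (Filter.Eventually.of_forall fun z => norm_inner_le_norm _ _)
  -- second moment of S
  have hSm : ∫ z : Vec d × Vec d, ‖s' (a • z.1 + b • z.2)‖ ^ 2 ∂(μ.prod γ) ≤ 4 * d * L := by
    have h1 := (hq.second_moment hL).2
    rw [← hmap.map_eq, integral_map hmap.measurable.aemeasurable
      (Continuous.aestronglyMeasurable (by fun_prop))] at h1
    exact h1
  have hZm : ∫ z : Vec d × Vec d, ‖z.2‖ ^ 2 ∂(μ.prod γ) ≤ 4 * d := by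
    have h1 : ∫ z : Vec d × Vec d, ‖z.2‖ ^ 2 ∂(μ.prod γ) = ∫ z, ‖z‖ ^ 2 ∂γ := by
      have h2 := integral_map (μ := μ.prod γ) (φ := Prod.snd) (f := fun z : Vec d => ‖z‖ ^ 2)
        measurable_snd.aemeasurable (Continuous.aestronglyMeasurable (by fun_prop))
      rw [(measurePreserving_snd (μ := μ) (ν := γ)).map_eq] at h2
      exact h2.symm
    rw [h1]; exact hγ2
  -- bound U
  have hU1 : ∫ z : Vec d × Vec d, ‖s z.1 - a • s' (a • z.1 + b • z.2)‖ ^ 2 ∂(μ.prod γ) ≤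
      ∫ z : Vec d × Vec d, ‖s z.1 - s (a⁻¹ • (a • z.1 + b • z.2))‖ ^ 2 ∂(μ.prod γ) := by
    have h1 : ∀ z : Vec d × Vec d, ‖s z.1 - s (a⁻¹ • (a • z.1 + b • z.2))‖ ^ 2 =
        ‖s z.1 - a • s' (a • z.1 + b • z.2)‖ ^ 2 +
        (2 * inner ℝ (s z.1 - a • s' (a • z.1 + b • z.2))
          (a • s' (a • z.1 + b • z.2) - s (a⁻¹ • (a • z.1 + b • z.2))) +
        ‖a • s' (a • z.1 + b • z.2) - s (a⁻¹ • (a • z.1 + b • z.2))‖ ^ 2) := by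
      intro z
      have := norm_add_sq_real (s z.1 - a • s' (a • z.1 + b • z.2))
        (a • s' (a • z.1 + b • z.2) - s (a⁻¹ • (a • z.1 + b • z.2)))
      rw [sub_add_sub_cancel] at this
      rw [this]; ring
    simp_rw [h1]
    rw [integral_add3 (sqi mU) ((ini mU mh1).const_mul 2) (sqi mh1), integral_const_mul, o1]
    have : 0 ≤ ∫ z : Vec d × Vec d,
        ‖a • s' (a • z.1 + b • z.2) - s (a⁻¹ • (a • z.1 + b • z.2))‖ ^ 2 ∂(μ.prod γ) :=
      integral_nonneg fun _ => by positivity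
    linarith
  have hU2 : ∫ z : Vec d × Vec d, ‖s z.1 - s (a⁻¹ • (a • z.1 + b • z.2))‖ ^ 2 ∂(μ.prod γ) ≤
      (L * (b / a)) ^ 2 * (4 * d) := by
    have h1 : ∫ z : Vec d × Vec d, ‖s z.1 - s (a⁻¹ • (a • z.1 + b • z.2))‖ ^ 2 ∂(μ.prod γ) ≤
        ∫ z : Vec d × Vec d, (L * (b / a)) ^ 2 * ‖z.2‖ ^ 2 ∂(μ.prod γ) := by
      refine integral_mono (sqi mAF) ((sqi mZ).const_mul _) fun z => ?_
      have h2 := pow_le_pow_left₀ (norm_nonneg _) (hAF z) 2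
      rw [norm_smul, mul_pow, Real.norm_eq_abs, sq_abs] at h2
      exact h2
    rw [integral_const_mul] at h1
    exact h1.trans (mul_le_mul_of_nonneg_left hZm (sq_nonneg _))
  have h1 : ∀ z : Vec d × Vec d, ‖s z.1 - s' (a • z.1 + b • z.2)‖ ^ 2 =
      ‖s z.1 - a • s' (a • z.1 + b • z.2)‖ ^ 2 +
      ((-2 * (1 - a)) * inner ℝ (s z.1 - a • s' (a • z.1 + b • z.2)) (s' (a • z.1 + b • z.2)) +
      (1 - a) ^ 2 * ‖s' (a • z.1 + b • z.2)‖ ^ 2) := by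
    intro z
    have := norm_sub_sq_real (s z.1 - a • s' (a • z.1 + b • z.2))
      ((1 - a) • s' (a • z.1 + b • z.2))
    rw [inner_smul_right, norm_smul, mul_pow, Real.norm_eq_abs, sq_abs] at this
    rw [show s z.1 - s' (a • z.1 + b • z.2) = s z.1 - a • s' (a • z.1 + b • z.2) -
      (1 - a) • s' (a • z.1 + b • z.2) from by rw [sub_smul, one_smul]; abel, this]
    ring
  simp_rw [h1]
  rw [integral_add3 (sqi mU) ((ini mU mS).const_mul _) ((sqi mS).const_mul _), integral_const_mul,
    integral_const_mul, o2]
  have h5 := mul_le_mul_of_nonneg_left hSm (sq_nonneg (1 - a))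
  linarith

/-! Gaussian facts -/

lemma gauss_integral (d : ℕ) : ∫ x, gaussDensity d 0 1 x = 1 := by
  have h := GaussianFourier.integral_rexp_neg_mul_sq_norm (V := Vec d) (b := 1 / 2) (by norm_num)
  have h2 : ∀ x : Vec d, gaussDensity d 0 1 x =
      (2 * π) ^ (-(d : ℝ) / 2) * Real.exp (-(1 / 2) * ‖x‖ ^ 2) := by
    intro x
    simp only [gaussDensity, sub_zero, mul_one]
    congr 2; ring
  simp_rw [h2]
  rw [integral_const_mul, h, finrank_euclideanSpace_fin,
    show π / (1 / 2) = 2 * π by ring, ← Real.rpow_add (by positivity)]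
  ring_nf
  simp

lemma gauss_pos (d : ℕ) (x : Vec d) : 0 < gaussDensity d 0 1 x := by
  unfold gaussDensity
  have := Real.pi_pos
  positivity

lemma gauss_cont (d : ℕ) : Continuous (gaussDensity d 0 1) := by
  unfold gaussDensity
  fun_prop

instance stdGauss_prob (d : ℕ) : IsProbabilityMeasure (stdGauss d) := by
  constructor
  have hi : Integrable (gaussDensity d 0 1) := by
    apply Integrable.of_integral_ne_zero
    rw [gauss_integral]; exact one_ne_zero
  rw [stdGauss, gaussMeasure, withDensity_apply _ MeasurableSet.univ, Measure.restrict_univ,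
    ← ofReal_integral_eq_lintegral_ofReal hi
      (Filter.Eventually.of_forall fun x => (gauss_pos d x).le), gauss_integral]
  simp

lemma gauss_good (d : ℕ) : Good d (gaussDensity d 0 1) (fun x => -x) 1 (stdGauss d) := by
  refine ⟨inferInstance, rfl, gauss_cont d, continuous_neg, gauss_pos d, zero_le_one,
    fun x v => ?_⟩
  have hpi := Real.pi_pos
  have h2 : ∀ x : Vec d, Real.log (gaussDensity d 0 1 x) =
      Real.log ((2 * π) ^ (-(d : ℝ) / 2)) - ‖x‖ ^ 2 / 2 := by
    intro x
    simp only [gaussDensity, sub_zero, mul_one]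
    rw [Real.log_mul (by positivity) (by positivity), Real.log_exp]
    ring
  rw [h2, h2, norm_add_sq_real, inner_neg_left, abs_le]
  constructor <;> nlinarith [sq_nonneg ‖v‖]

lemma gauss_moment (d : ℕ) : Integrable (fun z : Vec d => ‖z‖ ^ 2) (stdGauss d) ∧
    ∫ z, ‖z‖ ^ 2 ∂(stdGauss d) ≤ 4 * d := by
  have := (gauss_good d).second_moment one_pos
  simpa using this

lemma gauss_charFun (d : ℕ) (t : Vec d) :
    charFun (stdGauss d) t = Complex.exp (-(‖t‖ ^ 2 : ℝ) / 2) := by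
  have hm : Measurable (fun x => ENNReal.ofReal (gaussDensity d 0 1 x)) :=
    (gauss_cont d).measurable.ennreal_ofReal
  rw [charFun_apply, stdGauss, gaussMeasure, integral_withDensity_eq_integral_toReal_smul hm
        (Filter.Eventually.of_forall fun _ => ENNReal.ofReal_lt_top)]
  have h := GaussianFourier.integral_cexp_neg_mul_sq_norm_add (V := Vec d) (b := 1 / 2)
    (by norm_num) Complex.I t
  have h2 : ∀ x : Vec d, (ENNReal.ofReal (gaussDensity d 0 1 x)).toReal •
      Complex.exp ((inner ℝ x t : ℝ) * Complex.I) = (((2 * π) ^ (-(d : ℝ) / 2) : ℝ) : ℂ) *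
      Complex.exp (-(1 / 2) * ‖x‖ ^ 2 + Complex.I * (inner ℝ t x : ℝ)) := by
    intro x
    rw [ENNReal.toReal_ofReal (gauss_pos d x).le, gaussDensity, Complex.real_smul,
      Complex.ofReal_mul, Complex.exp_add, real_inner_comm]
    simp only [sub_zero, mul_one, Complex.ofReal_exp]
    rw [mul_assoc]
    congr 3
    · push_cast; ring
    · ring
  simp_rw [h2]
  rw [integral_const_mul, h, finrank_euclideanSpace_fin, ← mul_assoc]
  have h3 : (((2 * π) ^ (-(d : ℝ) / 2) : ℝ) : ℂ) * ((π : ℂ) / (1 / 2)) ^ ((d : ℂ) / 2) = 1 := by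
    have h4 : ((π : ℂ) / (1 / 2)) ^ ((d : ℂ) / 2) = (((2 * π) ^ ((d : ℝ) / 2) : ℝ) : ℂ) := by
      rw [Complex.ofReal_cpow (by positivity)]
      push_cast
      congr 1; ring
    rw [h4, ← Complex.ofReal_mul, ← Real.rpow_add (by positivity)]
    ring_nf
    simp
  rw [h3, one_mul, Complex.I_sq]
  congr 1
  push_cast
  ring

lemma comb_map {d : ℕ} (μ ν : Measure (Vec d)) [IsProbabilityMeasure μ] [IsProbabilityMeasure ν]
    (a b : ℝ) (t : Vec d) :
    charFun ((μ.prod ν).map (fun z : Vec d × Vec d => a • z.1 + b • z.2)) t =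
      charFun μ (a • t) * charFun ν (b • t) := by
  have h1 : (μ.prod ν).map (fun z : Vec d × Vec d => a • z.1 + b • z.2) =
      (μ.map (a • ·)).conv (ν.map (b • ·)) := by
    rw [Measure.conv, Measure.map_prod_map _ _ (by fun_prop) (by fun_prop),
      Measure.map_map (by fun_prop) (by fun_prop)]
    rfl
  have : IsProbabilityMeasure (μ.map (a • ·)) :=
    Measure.isProbabilityMeasure_map (by fun_prop)
  have : IsProbabilityMeasure (ν.map (b • ·)) :=
    Measure.isProbabilityMeasure_map (by fun_prop)
  rw [h1, charFun_conv, charFun_map_smul, charFun_map_smul]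

lemma gauss_step {d : ℕ} (P : Measure (Vec d)) [IsProbabilityMeasure P] (a1 s1 a b a2 s2 : ℝ)
    (ha : a1 * a = a2) (hs : a ^ 2 * s1 ^ 2 + b ^ 2 = s2 ^ 2) :
    ((((P.prod (stdGauss d)).map (fun z : Vec d × Vec d => a1 • z.1 + s1 • z.2))).prod
      (stdGauss d)).map (fun z : Vec d × Vec d => a • z.1 + b • z.2) =
    (P.prod (stdGauss d)).map (fun z : Vec d × Vec d => a2 • z.1 + s2 • z.2) := by
  have i1 : IsProbabilityMeasure
      ((P.prod (stdGauss d)).map (fun z : Vec d × Vec d => a1 • z.1 + s1 • z.2)) :=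
    Measure.isProbabilityMeasure_map (by fun_prop)
  have i2 : IsProbabilityMeasure
      ((P.prod (stdGauss d)).map (fun z : Vec d × Vec d => a2 • z.1 + s2 • z.2)) :=
    Measure.isProbabilityMeasure_map (by fun_prop)
  have i3 : IsProbabilityMeasure
      (((((P.prod (stdGauss d)).map (fun z : Vec d × Vec d => a1 • z.1 + s1 • z.2))).prod
      (stdGauss d)).map (fun z : Vec d × Vec d => a • z.1 + b • z.2)) :=
    Measure.isProbabilityMeasure_map (by fun_prop)
  refine Measure.ext_of_charFun ?_
  funext t
  rw [comb_map, comb_map, comb_map, gauss_charFun, gauss_charFun, gauss_charFun, smul_smul, ha,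
    mul_assoc, ← Complex.exp_add]
  congr 2
  simp only [norm_smul, mul_pow, Real.norm_eq_abs, sq_abs]
  rw [← hs]
  push_cast
  ring
/-- Lemma `discrete-Lip`: discretization error of the score under a local
Lipschitz assumption on `∇log p_u` for `u` in one discretization interval. Here `pdens u`
is the density of the forward marginal `p_u`. -/
theorem statement12 :
    ∃ C : ℝ, 0 < C ∧
      ∀ (d N k : ℕ) (T L : ℝ) (P : Measure (Vec d)) (g : ℝ → ℝ) (tp : ℕ → ℝ)
        (pdens : ℝ → Vec d → ℝ),
        IsProbabilityMeasure P → 0 < N → 1 ≤ k → k ≤ N →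
        ContinuousOn g (Set.Icc 0 T) → (∀ u ∈ Set.Ioc (0 : ℝ) T, 0 < g u) →
        0 ≤ tp 0 → tp N = T → (∀ j < N, tp j < tp (j + 1)) →
        -- for every `u ∈ [t_{k−1}, t_k]`, `p_u` is a `C¹` density of the forward marginal
        -- with `∇log p_u` `L`-Lipschitz
        (∀ u ∈ Set.Icc (tp (k - 1)) (tp k),
          MeasureTheory.volume.withDensity (fun x => ENNReal.ofReal (pdens u x)) =
              forwardLaw d P g u ∧
            ContDiff ℝ 1 (pdens u) ∧
            LipschitzWith (Real.toNNReal L) (scoreOf (pdens u))) →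
        1 ≤ L → Gvar g (tp (k - 1)) (tp k) ≤ 1 →
        ∀ t ∈ Set.Icc (tp (k - 1)) (tp k),
          (∫ ω, ‖scoreOf (pdens t) (xt d g t ω) -
                scoreOf (pdens (tp k)) (xts d g t (tp k) ω)‖ ^ 2
              ∂(coupleMeasure d P)) ≤
            C * d * L ^ 2 * Gvar g t (tp k) := by
  refine ⟨9, by norm_num, ?_⟩
  intro d N k T L P g tp pdens hP hN hk1 hkN hg hgpos h0 hT hinc hdens hL hG1 t ht
  -- monotonicity of the grid
  have hmono : ∀ m n : ℕ, m ≤ n → n ≤ N → tp m ≤ tp n := by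
    intro m n hmn
    induction n, hmn using Nat.le_induction with
    | base => intro _; exact le_rfl
    | succ n hmn ih => intro hn; exact (ih (by omega)).trans (hinc n (by omega)).le
  have hkm : 0 ≤ tp (k - 1) := h0.trans (hmono 0 (k - 1) (Nat.zero_le _) (by omega))
  have hkT : tp k ≤ T := hT ▸ hmono k N hkN le_rfl
  have ht0 : 0 ≤ t := hkm.trans ht.1
  have hii : ∀ x y : ℝ, 0 ≤ x → x ≤ T → 0 ≤ y → y ≤ T →
      IntervalIntegrable (fun u => (g u) ^ 2) volume x y := by
    intro x y hx0 hxT hy0 hyT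
    refine ContinuousOn.intervalIntegrable ((hg.pow 2).mono ?_)
    exact Set.uIcc_subset_Icc ⟨hx0, hxT⟩ ⟨hy0, hyT⟩
  have hnn : ∀ x y : ℝ, x ≤ y → 0 ≤ Gvar g x y := fun x y hxy =>
    intervalIntegral.integral_nonneg hxy fun u _ => sq_nonneg _
  have htT : t ≤ T := ht.2.trans hkT
  have hT0 : 0 ≤ T := ht0.trans htT
  have hadd : Gvar g 0 t + Gvar g t (tp k) = Gvar g 0 (tp k) :=
    intervalIntegral.integral_add_adjacent_intervals (hii _ _ le_rfl hT0 ht0 htT)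
      (hii _ _ ht0 htT (ht0.trans ht.2) hkT)
  have hadd2 : Gvar g (tp (k - 1)) t + Gvar g t (tp k) = Gvar g (tp (k - 1)) (tp k) :=
    intervalIntegral.integral_add_adjacent_intervals (hii _ _ hkm (ht.1.trans htT) ht0 htT)
      (hii _ _ ht0 htT (ht0.trans ht.2) hkT)
  have hGle : Gvar g t (tp k) ≤ 1 := by linarith [hnn _ _ ht.1]
  have hGnn := hnn _ _ ht.2
  have hGt := hnn _ _ ht0
  have ha : 0 < alphaF g t (tp k) := Real.exp_pos _
  have ha2 : alphaF g t (tp k) ^ 2 = Real.exp (-(Gvar g t (tp k))) := by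
    rw [alphaF, ← Real.exp_nat_mul]; congr 1; push_cast; ring
  have hb2 : Real.sqrt (1 - alphaF g t (tp k) ^ 2) ^ 2 = 1 - Real.exp (-(Gvar g t (tp k))) := by
    rw [ha2, Real.sq_sqrt]
    exact sub_nonneg.2 (Real.exp_le_one_iff.2 (by linarith))
  have hsig : ∀ u, 0 ≤ Gvar g 0 u → Real.sqrt (sigmaSq g u) ^ 2 = 1 - Real.exp (-(Gvar g 0 u)) := by
    intro u hu
    rw [Real.sq_sqrt, sigmaSq]
    exact sub_nonneg.2 (Real.exp_le_one_iff.2 (by linarith))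
  have hlaw := gauss_step P (alphaF g 0 t) (Real.sqrt (sigmaSq g t)) (alphaF g t (tp k))
    (Real.sqrt (1 - alphaF g t (tp k) ^ 2)) (alphaF g 0 (tp k)) (Real.sqrt (sigmaSq g (tp k)))
    (by rw [alphaF, alphaF, alphaF, ← Real.exp_add, ← hadd]; congr 1; ring)
    (by
      rw [hb2, ha2, hsig t hGt, hsig (tp k) (by linarith), ← hadd, neg_add, Real.exp_add]
      ring)
  have hprob : ∀ u, IsProbabilityMeasure (forwardLaw d P g u) := fun u =>
    Measure.isProbabilityMeasure_map (by fun_prop)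
  have hLpos : 0 < L := by linarith
  obtain ⟨e1, c1, l1⟩ := hdens t ht
  obtain ⟨e2, c2, l2⟩ := hdens (tp k) ⟨ht.1.trans ht.2, le_rfl⟩
  have g1 := good_of_lip (hprob t) e1 c1 hLpos.le l1
  have g2 := good_of_lip (hprob (tp k)) e2 c2 hLpos.le l2
  have hY : Measurable (fun z : Vec d × Vec d => alphaF g t (tp k) • z.1 +
      Real.sqrt (1 - alphaF g t (tp k) ^ 2) • z.2) := by fun_prop
  have hmp : MeasurePreserving (fun z : Vec d × Vec d => alphaF g t (tp k) • z.1 +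
      Real.sqrt (1 - alphaF g t (tp k) ^ 2) • z.2) ((forwardLaw d P g t).prod (stdGauss d))
      (forwardLaw d P g (tp k)) := ⟨hY, hlaw⟩
  have hcore := core hLpos g1 g2 hmp (by
    intro x y
    have := l1.dist_le_mul x y
    rwa [dist_eq_norm, dist_eq_norm, Real.coe_toNNReal _ hLpos.le] at this) ha
    (gauss_moment d).1 (gauss_moment d).2
  -- transfer to the coupling
  have hmapc : (coupleMeasure d P).map (fun ω => (xt d g t ω, ω.2.2)) =
      (forwardLaw d P g t).prod (stdGauss d) := by
    have h1 := (measurePreserving_prodAssoc P (stdGauss d) (stdGauss d)).map_eq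
    have hm0 : Measurable (fun ω : Vec d × Vec d × Vec d => (xt d g t ω, ω.2.2)) := by
      unfold xt; fun_prop
    rw [coupleMeasure, ← h1, Measure.map_map hm0 (MeasurableEquiv.measurable _)]
    have h2 : (forwardLaw d P g t).prod (stdGauss d) =
        ((P.prod (stdGauss d)).prod (stdGauss d)).map (Prod.map (fun q : Vec d × Vec d =>
          alphaF g 0 t • q.1 + Real.sqrt (sigmaSq g t) • q.2) id) := by
      rw [← Measure.map_prod_map _ _ (by fun_prop) measurable_id, Measure.map_id]
      rfl
    rw [h2]
    rfl
  have htrans : (∫ ω, ‖scoreOf (pdens t) (xt d g t ω) -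
      scoreOf (pdens (tp k)) (xts d g t (tp k) ω)‖ ^ 2 ∂(coupleMeasure d P)) =
      ∫ z : Vec d × Vec d, ‖scoreOf (pdens t) z.1 - scoreOf (pdens (tp k))
        (alphaF g t (tp k) • z.1 + Real.sqrt (1 - alphaF g t (tp k) ^ 2) • z.2)‖ ^ 2
        ∂((forwardLaw d P g t).prod (stdGauss d)) := by
    have hs1 := l1.continuous
    have hs2 := l2.continuous
    rw [← hmapc, integral_map]
    · rfl
    · unfold xt; fun_prop
    · exact Continuous.aestronglyMeasurable (by fun_prop)
  rw [htrans]
  refine hcore.trans ?_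
  set G := Gvar g t (tp k) with hGdef
  have hq : (Real.sqrt (1 - alphaF g t (tp k) ^ 2) / alphaF g t (tp k)) ^ 2 ≤ 2 * G := by
    rw [div_pow, hb2, ha2, sub_div, div_self (Real.exp_pos _).ne', Real.exp_neg, one_div, inv_inv]
    have := abs_le.1 (Real.abs_exp_sub_one_sub_id_le (x := G) (by rw [abs_of_nonneg hGnn]; exact hGle))
    nlinarith
  have ha1 : (1 - alphaF g t (tp k)) ^ 2 ≤ G / 4 := by
    have h1 : 1 - alphaF g t (tp k) ≤ G / 2 := by
      have := Real.add_one_le_exp (-G / 2)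
      rw [alphaF]; linarith
    have h2 : 0 ≤ 1 - alphaF g t (tp k) :=
      sub_nonneg.2 (Real.exp_le_one_iff.2 (by linarith))
    nlinarith
  have hd : (0 : ℝ) ≤ d := Nat.cast_nonneg d
  have hLL : L ≤ L ^ 2 := by nlinarith
  calc (L * (Real.sqrt (1 - alphaF g t (tp k) ^ 2) / alphaF g t (tp k))) ^ 2 * (4 * d) +
        (1 - alphaF g t (tp k)) ^ 2 * (4 * d * L)
      ≤ L ^ 2 * (2 * G) * (4 * d) + G / 4 * (4 * d * L ^ 2) := by
        rw [mul_pow]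
        gcongr
    _ = 9 * d * L ^ 2 * G := by ring


end DiffusionKL
end
end
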